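/- For every integer n ≥ 2, every positive integer N, and every n-linear form U : (ℂ^N)^n → ℂ, one has (∑_{i₁,…,iₙ=1}^N |U(e_{i₁},…,e_{iₙ})|^{2n/(n+1)})^{(n+1)/(2n)} ≤ (2/√π) · (n-1)^{0.304975} · ‖U‖. Consequently the optimal complex multilinear Bohnenblust–Hille constant satisfies K_n ≤ (2/√π)(n-1)^{0.304975}. -/

import Mathlib

open Real

/-- The Bohnenblust--Hille quantity of an `n`-linear form on `ℓ_∞^N` over `ℂ`:
`(∑_{i₁,…,iₙ} |U(e_{i₁},…,e_{iₙ})|^{2n/(n+1)})^{(n+1)/(2n)}`. -/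
noncomputable def BHcomplex (n N : ℕ)
    (U : ContinuousMultilinearMap ℂ (fun _ : Fin n => (Fin N → ℂ)) ℂ) : ℝ :=
  (∑ i : Fin n → Fin N,
      ‖U (fun k => Pi.single (i k) (1 : ℂ))‖ ^ ((2 * n : ℝ) / (n + 1)))
    ^ ((n + 1 : ℝ) / (2 * n))

/-- The optimal complex multilinear Bohnenblust--Hille constant. -/
noncomputable def KcomplexOpt (n : ℕ) : ℝ :=
  sInf {C : ℝ | 1 ≤ C ∧ ∀ N : ℕ, 0 < N →
    ∀ U : ContinuousMultilinearMap ℂ (fun _ : Fin n => (Fin N → ℂ)) ℂ,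
      BHcomplex n N U ≤ C * ‖U‖}

section
open MeasureTheory

open Real

lemma bh_holder_fin {ι κ : Type*} [Fintype ι] [Fintype κ] (w : κ → ℝ) (hw : ∀ k, 0 < w k)
    (hw1 : ∑ k, w k = 1) (f : κ → ι → ℝ) (hf : ∀ k x, 0 ≤ f k x) :
    ∑ x, ∏ k, f k x ^ w k ≤ ∏ k, (∑ x, f k x) ^ w k := by
  have hS : ∀ k, 0 ≤ ∑ x, f k x := fun k => Finset.sum_nonneg fun x _ => hf k x
  by_cases h : ∃ k, ∑ x, f k x = 0
  · obtain ⟨k, hk⟩ := h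
    have h0 : ∀ x, f k x = 0 := fun x =>
      (Finset.sum_eq_zero_iff_of_nonneg (fun x _ => hf k x)).1 hk x (Finset.mem_univ x)
    have : ∑ x, ∏ k, f k x ^ w k = 0 := by
      apply Finset.sum_eq_zero
      intro x _
      apply Finset.prod_eq_zero (Finset.mem_univ k)
      rw [h0 x, Real.zero_rpow (hw k).ne']
    rw [this]
    exact Finset.prod_nonneg fun k _ => Real.rpow_nonneg (hS k) _
  · push Not at h
    have hpos : ∀ k, 0 < ∑ x, f k x := fun k => lt_of_le_of_ne (hS k) (h k).symm
    have key : ∀ x, ∏ k, f k x ^ w k ≤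
        (∏ k, (∑ x, f k x) ^ w k) * ∑ k, w k * (f k x / ∑ x, f k x) := by
      intro x
      have := Real.geom_mean_le_arith_mean_weighted Finset.univ w (fun k => f k x / ∑ x, f k x)
        (fun k _ => (hw k).le) hw1 (fun k _ => div_nonneg (hf k x) (hS k))
      have h2 : ∏ k, f k x ^ w k =
          (∏ k, (∑ x, f k x) ^ w k) * ∏ k, (f k x / ∑ x, f k x) ^ w k := by
        rw [← Finset.prod_mul_distrib]
        apply Finset.prod_congr rfl
        intro k _
        rw [← Real.mul_rpow (hS k) (div_nonneg (hf k x) (hS k)), mul_div_cancel₀ _ (h k)]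
      rw [h2]
      exact mul_le_mul_of_nonneg_left this
        (Finset.prod_nonneg fun k _ => Real.rpow_nonneg (hS k) _)
    calc ∑ x, ∏ k, f k x ^ w k ≤ ∑ x, (∏ k, (∑ x, f k x) ^ w k) * ∑ k, w k * (f k x / ∑ x, f k x) :=
          Finset.sum_le_sum fun x _ => key x
      _ = (∏ k, (∑ x, f k x) ^ w k) * 1 := by
          rw [← Finset.mul_sum, Finset.sum_comm]
          congr 1
          rw [← hw1]
          apply Finset.sum_congr rfl
          intro k _
          rw [← Finset.mul_sum, ← Finset.sum_div, div_self (h k), mul_one]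
      _ = _ := mul_one _

lemma bh_sum_cons {I : Type*} [Fintype I] {M : ℕ} (g : (Fin (M + 1) → I) → ℝ) :
    ∑ i, g i = ∑ x : I, ∑ i' : Fin M → I, g (Fin.cons x i') := by
  rw [← Fintype.sum_prod_type']
  exact (Fintype.sum_equiv (Fin.consEquiv (fun _ => I)) _ _ (fun x => rfl)).symm

lemma bh_sum_insertNth {I : Type*} [Fintype I] {M : ℕ} (k : Fin (M + 1))
    (g : (Fin (M + 1) → I) → ℝ) :
    ∑ i, g i = ∑ i' : Fin M → I, ∑ x : I, g (Fin.insertNth k x i') := by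
  rw [Finset.sum_comm, ← Fintype.sum_prod_type']
  exact (Fintype.sum_equiv (Fin.insertNthEquiv (fun _ => I) k) _ _ (fun x => rfl)).symm

lemma bh_removeNth_succ_cons {I : Type*} {M : ℕ} (k : Fin (M + 1)) (x : I) (i : Fin (M + 1) → I) :
    Fin.removeNth (α := fun _ => I) k.succ (Fin.cons (α := fun _ => I) x i) =
      Fin.cons (α := fun _ => I) x (Fin.removeNth (α := fun _ => I) k i) := by
  ext j
  refine Fin.cases ?_ (fun j => ?_) j
  · simp [Fin.removeNth]
  · simp [Fin.removeNth]

/-- Discrete Loomis-Whitney inequality. -/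
lemma bh_loomis_whitney {I : Type*} [Fintype I] (M : ℕ) (hM : 1 ≤ M) :
    ∀ (c : Fin (M + 1) → (Fin M → I) → ℝ), (∀ k i, 0 ≤ c k i) →
    ∑ i : Fin (M + 1) → I, ∏ k, c k (Fin.removeNth (α := fun _ => I) k i) ^ (1 / (M : ℝ)) ≤
      ∏ k, (∑ i', c k i') ^ (1 / (M : ℝ)) := by
  induction M, hM using Nat.le_induction with
  | base =>
    intro c hc
    have e1 : ∀ k : Fin 2, ∑ i', c k i' = ∑ x : I, c k (fun _ => x) := fun k =>
      Fintype.sum_equiv (Equiv.funUnique (Fin 1) I) _ _ (fun i => by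
        congr 1; ext j; fin_cases j; rfl)
    rw [bh_sum_cons]
    have e2 : ∀ g : Fin (1 + 1) → ℝ, ∏ k, g k = g 0 * g 1 := fun g => Fin.prod_univ_two g
    simp only [e2, e1, Nat.cast_one, div_one, Real.rpow_one]
    rw [Finset.sum_mul_sum, Finset.sum_comm]
    apply le_of_eq
    rw [Fintype.sum_equiv (Equiv.funUnique (Fin 1) I) _
      (fun y => ∑ x : I, c 0 (fun _ => y) * c 1 (fun _ => x))]
    intro i
    apply Finset.sum_congr rfl
    intro x _
    congr 2
    · ext j; fin_cases j; rfl
    · ext j; fin_cases j; rfl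
  | succ M hM ih =>
    intro c hc
    have hM0 : (0 : ℝ) < M := by exact_mod_cast hM
    rw [bh_sum_cons]
    have step : ∀ x : I, ∑ i' : Fin (M + 1) → I, ∏ k : Fin (M + 2),
        c k (Fin.removeNth (α := fun _ => I) k (Fin.cons (α := fun _ => I) x i')) ^ (1 / ((M + 1 : ℕ) : ℝ)) ≤
        (∑ i', c 0 i') ^ (1 / ((M + 1 : ℕ) : ℝ)) *
          ∏ k : Fin (M + 1), (∑ i', c k.succ (Fin.cons (α := fun _ => I) x i')) ^ (1 / ((M + 1 : ℕ) : ℝ)) := by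
      intro x
      set d : Fin (M + 1) → (Fin M → I) → ℝ := fun k i' => c k.succ (Fin.cons (α := fun _ => I) x i') with hd
      have hd0 : ∀ k i, 0 ≤ d k i := fun k i => hc _ _
      set w : Bool → ℝ := fun b => if b then 1 / ((M + 1 : ℕ) : ℝ) else M / ((M + 1 : ℕ) : ℝ) with hw
      set f : Bool → (Fin (M + 1) → I) → ℝ := fun b i' => if b then c 0 i' else
        ∏ k, d k (Fin.removeNth (α := fun _ => I) k i') ^ (1 / (M : ℝ)) with hf
      have hf0 : ∀ b i, 0 ≤ f b i := by
        intro b i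
        cases b
        · simp only [hf]
          exact Finset.prod_nonneg fun k _ => Real.rpow_nonneg (hd0 _ _) _
        · simp only [hf]; exact hc _ _
      have H := bh_holder_fin w (by intro b; cases b <;> simp [hw] <;> positivity)
        (by simp [hw]; field_simp; ring) f hf0
      have pw : ∀ (s : Fin (M + 1) → ℝ), (∀ k, 0 ≤ s k) →
          (∏ k, s k ^ (1 / (M : ℝ))) ^ ((M : ℝ) / ((M + 1 : ℕ) : ℝ)) =
          ∏ k, s k ^ (1 / ((M + 1 : ℕ) : ℝ)) := by
        intro s hs
        rw [← Real.finsetProd_rpow _ _ (fun k _ => Real.rpow_nonneg (hs k) _)]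
        apply Finset.prod_congr rfl
        intro k _
        rw [← Real.rpow_mul (hs k)]
        congr 1
        field_simp
      simp only [Fintype.prod_bool, hw, hf, if_true, Bool.false_eq_true, if_false] at H
      calc _ = ∑ i' : Fin (M + 1) → I, c 0 i' ^ (1 / ((M + 1 : ℕ) : ℝ)) *
            (∏ k, d k (Fin.removeNth (α := fun _ => I) k i') ^ (1 / (M : ℝ))) ^ ((M : ℝ) / ((M + 1 : ℕ) : ℝ)) := by
              apply Finset.sum_congr rfl
              intro i' _
              rw [Fin.prod_univ_succ, pw _ (fun k => hd0 _ _)]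
              congr 1
              apply Finset.prod_congr rfl
              intro k _
              rw [bh_removeNth_succ_cons]
        _ ≤ _ := H
        _ ≤ (∑ i', c 0 i') ^ (1 / ((M + 1 : ℕ) : ℝ)) *
            (∏ k, (∑ i', d k i') ^ (1 / (M : ℝ))) ^ ((M : ℝ) / ((M + 1 : ℕ) : ℝ)) := by
              apply mul_le_mul_of_nonneg_left _ (Real.rpow_nonneg (Finset.sum_nonneg fun _ _ => hc _ _) _)
              apply Real.rpow_le_rpow _ (ih d hd0) (by positivity)
              exact Finset.sum_nonneg fun _ _ => Finset.prod_nonneg fun k _ => Real.rpow_nonneg (hd0 _ _) _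
        _ = _ := by rw [pw _ (fun k => Finset.sum_nonneg fun _ _ => hd0 _ _)]
    refine (Finset.sum_le_sum fun x _ => step x).trans ?_
    rw [← Finset.mul_sum, Fin.prod_univ_succ]
    apply mul_le_mul_of_nonneg_left _ (Real.rpow_nonneg (Finset.sum_nonneg fun _ _ => hc _ _) _)
    have H := bh_holder_fin (κ := Fin (M + 1)) (ι := I) (fun _ => 1 / ((M + 1 : ℕ) : ℝ)) (fun _ => by positivity)
      (by simp; field_simp) (fun k x => ∑ i', c k.succ (Fin.cons (α := fun _ => I) x i'))
      (fun k x => Finset.sum_nonneg fun _ _ => hc _ _)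
    refine H.trans (le_of_eq ?_)
    apply Finset.prod_congr rfl
    intro k _
    rw [bh_sum_cons (fun i => c k.succ i)]

/-- Blei type inequality. -/
lemma bh_blei {I : Type*} [Fintype I] (M : ℕ) (hM : 1 ≤ M) (a : (Fin (M + 1) → I) → ℝ)
    (ha : ∀ i, 0 ≤ a i) (R : ℝ) (hR : 0 ≤ R)
    (h : ∀ k : Fin (M + 1), ∑ i' : Fin M → I,
      (∑ j, a (Fin.insertNth (α := fun _ => I) k j i') ^ 2) ^ ((M : ℝ) / (M + 1)) ≤ R) :
    ∑ i, a i ^ (2 * (M + 1 : ℝ) / (M + 2)) ≤ R ^ ((M + 1 : ℝ) ^ 2 / (M * (M + 2))) := by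
  have hM0 : (0 : ℝ) < M := by exact_mod_cast hM
  set B : Fin (M + 1) → (Fin M → I) → ℝ := fun k i' =>
    ∑ j, a (Fin.insertNth (α := fun _ => I) k j i') ^ 2 with hB
  have hB0 : ∀ k i, 0 ≤ B k i := fun k i => Finset.sum_nonneg fun _ _ => sq_nonneg _
  set c : Fin (M + 1) → (Fin M → I) → ℝ := fun k i' => B k i' ^ ((M : ℝ) / (M + 1)) with hc
  have hc0 : ∀ k i, 0 ≤ c k i := fun k i => Real.rpow_nonneg (hB0 k i) _
  set P : Fin (M + 1) → (Fin (M + 1) → I) → ℝ := fun k i =>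
    a i ^ 2 / B k (Fin.removeNth (α := fun _ => I) k i) * c k (Fin.removeNth (α := fun _ => I) k i) with hP
  have hP0 : ∀ k i, 0 ≤ P k i := fun k i =>
    mul_nonneg (div_nonneg (sq_nonneg _) (hB0 _ _)) (hc0 _ _)
  have hPs : ∀ k, ∑ i, P k i ≤ R := by
    intro k
    rw [bh_sum_insertNth k]
    refine le_trans (Finset.sum_le_sum fun i' _ => ?_) (h k)
    simp only [hP, Fin.removeNth_insertNth]
    rw [← Finset.sum_mul, ← Finset.sum_div]
    change B k i' / B k i' * c k i' ≤ c k i'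
    exact mul_le_of_le_one_left (hc0 _ _) (div_self_le_one _)
  set f : Option (Fin (M + 1)) → (Fin (M + 1) → I) → ℝ := fun o i =>
    match o with
    | none => ∏ k, c k (Fin.removeNth (α := fun _ => I) k i) ^ (1 / (M : ℝ))
    | some k => P k i with hf
  have hf0 : ∀ o i, 0 ≤ f o i := by
    intro o i
    cases o with
    | none => exact Finset.prod_nonneg fun k _ => Real.rpow_nonneg (hc0 _ _) _
    | some k => exact hP0 k i
  have H := bh_holder_fin (fun _ : Option (Fin (M + 1)) => 1 / (M + 2 : ℝ)) (fun _ => by positivity)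
    (by simp; field_simp; ring) f hf0
  have hSf : ∀ o, 0 ≤ ∑ i, f o i := fun o => Finset.sum_nonneg fun i _ => hf0 o i
  have LW := bh_loomis_whitney M hM c hc0
  calc ∑ i, a i ^ (2 * (M + 1 : ℝ) / (M + 2)) ≤ ∑ i, ∏ o, f o i ^ (1 / (M + 2 : ℝ)) := by
        apply Finset.sum_le_sum
        intro i _
        rcases (ha i).eq_or_lt with h0 | hpos
        · rw [← h0, Real.zero_rpow (by positivity)]
          exact Finset.prod_nonneg fun o _ => Real.rpow_nonneg (hf0 _ _) _
        · have hBp : ∀ k, 0 < B k (Fin.removeNth (α := fun _ => I) k i) := by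
            intro k
            have : a i ^ 2 ≤ B k (Fin.removeNth (α := fun _ => I) k i) := by
              have e : i = Fin.insertNth (α := fun _ => I) k (i k) (Fin.removeNth (α := fun _ => I) k i) := by
                simp
              conv_lhs => rw [e]
              exact Finset.single_le_sum (f := fun j => a (Fin.insertNth (α := fun _ => I) k j
                (Fin.removeNth (α := fun _ => I) k i)) ^ 2) (fun _ _ => sq_nonneg _) (Finset.mem_univ (i k))
            exact lt_of_lt_of_le (by positivity) this
          rw [Fintype.prod_option]
          simp only [hf]
          rw [← Real.finsetProd_rpow _ _ (fun k _ => Real.rpow_nonneg (hc0 _ _) _), ← Finset.prod_mul_distrib]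
          have : ∀ k : Fin (M + 1), ((c k (Fin.removeNth (α := fun _ => I) k i) ^ (1 / (M : ℝ))) ^ (1 / (M + 2 : ℝ)) *
              P k i ^ (1 / (M + 2 : ℝ))) = a i ^ (2 / (M + 2 : ℝ)) := by
            intro k
            have hb := hBp k
            simp only [hP, hc]
            set b := B k (Fin.removeNth (α := fun _ => I) k i)
            rw [← Real.mul_rpow (by positivity) (by positivity), ← Real.rpow_mul hb.le]
            have : b ^ ((M : ℝ) / (M + 1) * (1 / M)) * (a i ^ 2 / b * b ^ ((M : ℝ) / (M + 1))) = a i ^ 2 := by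
              have : b ^ ((M : ℝ) / (M + 1) * (1 / M)) * b ^ ((M : ℝ) / (M + 1)) = b := by
                rw [← Real.rpow_add hb]
                conv_rhs => rw [← Real.rpow_one b]
                congr 1
                field_simp
                ring
              calc _ = a i ^ 2 / b * (b ^ ((M : ℝ) / (M + 1) * (1 / M)) * b ^ ((M : ℝ) / (M + 1))) := by ring
                _ = _ := by rw [this]; field_simp
            rw [this, ← Real.rpow_natCast, ← Real.rpow_mul hpos.le]
            congr 1
            push_cast
            ring
          rw [Finset.prod_congr rfl (fun k _ => this k)]
          simp only [Finset.prod_const, Finset.card_univ, Fintype.card_fin]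
          rw [← Real.rpow_natCast, ← Real.rpow_mul hpos.le]
          apply le_of_eq
          congr 1
          push_cast
          ring
    _ ≤ _ := H
    _ ≤ (R ^ ((M + 1 : ℝ) / M)) ^ (1 / (M + 2 : ℝ)) * ∏ k : Fin (M + 1), R ^ (1 / (M + 2 : ℝ)) := by
        rw [Fintype.prod_option]
        apply mul_le_mul
        · apply Real.rpow_le_rpow (hSf none) _ (by positivity)
          refine LW.trans ?_
          calc ∏ k, (∑ i', c k i') ^ (1 / (M : ℝ)) ≤ ∏ k : Fin (M + 1), R ^ (1 / (M : ℝ)) := by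
                apply Finset.prod_le_prod
                · intro k _; exact Real.rpow_nonneg (Finset.sum_nonneg fun _ _ => hc0 _ _) _
                · intro k _
                  exact Real.rpow_le_rpow (Finset.sum_nonneg fun _ _ => hc0 _ _) (h k) (by positivity)
            _ = _ := by
                simp only [Finset.prod_const, Finset.card_univ, Fintype.card_fin]
                rw [← Real.rpow_natCast, ← Real.rpow_mul hR]
                congr 1
                push_cast
                ring
        · apply Finset.prod_le_prod
          · intro k _; exact Real.rpow_nonneg (hSf (some k)) _
          · intro k _
            exact Real.rpow_le_rpow (hSf (some k)) (hPs k) (by positivity)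
        · exact Finset.prod_nonneg fun k _ => Real.rpow_nonneg (hSf (some k)) _
        · positivity
    _ = _ := by
        simp only [Finset.prod_const, Finset.card_univ, Fintype.card_fin]
        rw [← Real.rpow_natCast, ← Real.rpow_mul hR, ← Real.rpow_mul hR]
        rcases hR.eq_or_lt with h0 | hpos
        · rw [← h0, Real.zero_rpow (by positivity), Real.zero_rpow (by positivity), zero_mul,
            Real.zero_rpow (by positivity)]
        · rw [← Real.rpow_add hpos]
          congr 1
          push_cast
          field_simp
          ring

/-- Uniform probability measure on angles. -/
noncomputable def bhNu : Measure ℝ := (ENNReal.ofReal (2 * π))⁻¹ • volume.restrict (Set.Ioc 0 (2 * π))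

instance bhNu_prob : IsProbabilityMeasure bhNu := by
  constructor
  simp only [bhNu, Measure.smul_apply, Measure.restrict_apply MeasurableSet.univ, Set.univ_inter, Real.volume_Ioc, smul_eq_mul, sub_zero]
  exact ENNReal.inv_mul_cancel (by simp; positivity) ENNReal.ofReal_ne_top

/-- Product of uniform angle measures. -/
noncomputable def bhMu (N : ℕ) : Measure (Fin N → ℝ) := Measure.pi fun _ => bhNu

instance bhMu_prob (N : ℕ) : IsProbabilityMeasure (bhMu N) := by
  unfold bhMu; infer_instance

/-- The phase. -/
noncomputable def bhE (t : ℝ) : ℂ := Complex.exp (t * Complex.I)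

lemma bhE_norm (t : ℝ) : ‖bhE t‖ = 1 := by simp [bhE, Complex.norm_exp_ofReal_mul_I]

lemma bhE_cont : Continuous bhE := by unfold bhE; fun_prop

/-- Steinhaus sum. -/
noncomputable def bhX {N : ℕ} (a : Fin N → ℂ) (t : Fin N → ℝ) : ℂ := ∑ j, a j * bhE (t j)

lemma bhX_cont {N : ℕ} (a : Fin N → ℂ) : Continuous (bhX a) := by
  unfold bhX
  exact continuous_finsetSum _ fun j _ => continuous_const.mul (bhE_cont.comp (continuous_apply j))

lemma bhX_norm_le {N : ℕ} (a : Fin N → ℂ) (t : Fin N → ℝ) : ‖bhX a t‖ ≤ ∑ j, ‖a j‖ := by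
  refine (norm_sum_le _ _).trans (Finset.sum_le_sum fun j _ => ?_)
  rw [norm_mul, bhE_norm, mul_one]

lemma bh_integrable_bdd {α : Type*} [MeasurableSpace α] {μ : Measure α} [IsFiniteMeasure μ] {f : α → ℝ}
    (hf : Measurable f) (C : ℝ) (h : ∀ t, |f t| ≤ C) : Integrable f μ :=
  Integrable.of_bound hf.aestronglyMeasurable C (Filter.Eventually.of_forall h)

lemma bhX_rpow_int {N : ℕ} (a : Fin N → ℂ) (p : ℝ) (hp : 0 ≤ p) : Integrable (fun t => ‖bhX a t‖ ^ p) (bhMu N) := by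
  refine bh_integrable_bdd ((bhX_cont a).norm.rpow_const (fun _ => Or.inr hp)).measurable ((∑ j, ‖a j‖) ^ p) fun t => ?_
  rw [abs_of_nonneg (by positivity)]
  exact Real.rpow_le_rpow (norm_nonneg _) (bhX_norm_le a t) hp

/-- Khinchine at exponent `2M/(M+1)`. -/
def BhKh (M : ℕ) (A : ℝ) : Prop := ∀ (N : ℕ) (a : Fin N → ℂ),
  (∑ j, ‖a j‖ ^ 2) ^ ((M : ℝ) / (M + 1)) ≤
    A ^ ((2 * M : ℝ) / (M + 1)) * ∫ t, ‖bhX a t‖ ^ ((2 * M : ℝ) / (M + 1)) ∂(bhMu N)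

/-- BH with constant. -/
def BhC (M : ℕ) (K : ℝ) : Prop := ∀ (N : ℕ) (U : ContinuousMultilinearMap ℂ (fun _ : Fin M => (Fin N → ℂ)) ℂ),
  ∑ i : Fin M → Fin N, ‖U (fun k => Pi.single (i k) (1 : ℂ))‖ ^ ((2 * M : ℝ) / (M + 1)) ≤ (K * ‖U‖) ^ ((2 * M : ℝ) / (M + 1))

lemma bh_recursion (M : ℕ) (hM : 1 ≤ M) (A K : ℝ) (hA : 0 ≤ A) (hK : 0 ≤ K) (h1 : BhKh M A) (h2 : BhC M K) :
    BhC (M + 1) (A * K) := by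
  intro N U
  have hM0 : (0 : ℝ) < M := by exact_mod_cast hM
  set p : ℝ := (2 * M : ℝ) / (M + 1) with hp
  have hp0 : 0 < p := by positivity
  set R := (A * K * ‖U‖) ^ p with hR
  have key := bh_blei M hM (fun i : Fin (M + 1) → Fin N => ‖U (fun k => Pi.single (i k) (1 : ℂ))‖)
    (fun _ => norm_nonneg _) R (by positivity) ?_
  · have e1 : (2 * ((M + 1 : ℕ) : ℝ)) / (((M + 1 : ℕ) : ℝ) + 1) = 2 * (M + 1 : ℝ) / (M + 2) := by
      push_cast; ring
    rw [e1]
    refine key.trans (le_of_eq ?_)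
    rw [hR, ← Real.rpow_mul (by positivity)]
    congr 1
    rw [hp]; field_simp
  intro k
  have e0 : ∀ (i' : Fin M → Fin N) (s : Fin N → ℂ),
      U.curryMid k s (fun l => Pi.single (i' l) (1 : ℂ)) = ∑ j, U (fun l => Pi.single
        (Fin.insertNth (α := fun _ => Fin N) k j i' l) (1 : ℂ)) * s j := by
    intro i' s
    have hs : s = ∑ j, s j • (Pi.single j (1 : ℂ) : Fin N → ℂ) := by
      ext l; simp [Finset.sum_apply, Pi.single_apply]
    conv_lhs => rw [hs]
    rw [map_sum, ContinuousMultilinearMap.sum_apply]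
    refine Finset.sum_congr rfl fun j _ => ?_
    rw [map_smul, ContinuousMultilinearMap.smul_apply, smul_eq_mul, mul_comm]
    congr 1
    rw [ContinuousMultilinearMap.curryMid_apply]
    congr 1
    funext l
    refine Fin.succAboveCases k ?_ ?_ l <;> simp
  have hbound : ∀ t : Fin N → ℝ, ∑ i' : Fin M → Fin N,
      ‖bhX (fun j => U (fun l => Pi.single (Fin.insertNth (α := fun _ => Fin N) k j i' l) (1 : ℂ))) t‖ ^ p
        ≤ (K * ‖U‖) ^ p := by
    intro t
    have := h2 N (U.curryMid k (fun j => bhE (t j)))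
    rw [← hp] at this
    simp only [e0] at this
    refine this.trans ?_
    apply Real.rpow_le_rpow (by positivity) _ hp0.le
    apply mul_le_mul_of_nonneg_left _ hK
    refine (ContinuousLinearMap.le_opNorm _ _).trans ?_
    rw [ContinuousMultilinearMap.norm_curryMid]
    apply mul_le_of_le_one_right (norm_nonneg _)
    rw [pi_norm_le_iff_of_nonneg zero_le_one]
    intro j; rw [bhE_norm]
  calc _ ≤ ∑ i' : Fin M → Fin N, A ^ p * ∫ t, ‖bhX (fun j => U (fun l => Pi.single
        (Fin.insertNth (α := fun _ => Fin N) k j i' l) (1 : ℂ))) t‖ ^ p ∂(bhMu N) :=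
        Finset.sum_le_sum fun i' _ => h1 N _
    _ = A ^ p * ∫ t, ∑ i' : Fin M → Fin N, ‖bhX (fun j => U (fun l => Pi.single
        (Fin.insertNth (α := fun _ => Fin N) k j i' l) (1 : ℂ))) t‖ ^ p ∂(bhMu N) := by
        rw [← Finset.mul_sum, integral_finsetSum]
        intro i' _
        exact bhX_rpow_int _ _ hp0.le
    _ ≤ A ^ p * ∫ t, (K * ‖U‖) ^ p ∂(bhMu N) := by
        apply mul_le_mul_of_nonneg_left _ (by positivity)
        refine integral_mono (integrable_finsetSum _ fun i' _ => bhX_rpow_int _ _ hp0.le) (integrable_const _) hbound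
    _ = R := by
        rw [integral_const, probReal_univ, one_smul, hR, mul_assoc A, Real.mul_rpow hA (by positivity)]

lemma bh_one : BhC 1 1 := by
  intro N U
  norm_num
  -- phases
  set b : Fin N → ℂ := fun j => U (fun _ => Pi.single j (1 : ℂ)) with hb
  have e : ∑ i : Fin 1 → Fin N, ‖U (fun k => Pi.single (i k) (1 : ℂ))‖ = ∑ j, ‖b j‖ := by
    rw [← (Equiv.funUnique (Fin 1) (Fin N)).sum_comp]
    refine Finset.sum_congr rfl fun i _ => ?_
    simp only [hb, Equiv.funUnique_apply]
    congr 2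
    funext k
    rw [Subsingleton.elim k default]
  rw [e]
  set s : Fin N → ℂ := fun j => if b j = 0 then 0 else (‖b j‖ : ℂ) / b j with hs
  have hs1 : ‖s‖ ≤ 1 := by
    rw [pi_norm_le_iff_of_nonneg zero_le_one]
    intro j
    simp only [hs]
    split_ifs with h
    · simp
    · simp [h]
  have hU : U (fun _ => s) = ∑ j, b j * s j := by
    have hss : s = ∑ j, s j • (Pi.single j (1 : ℂ) : Fin N → ℂ) := by
      ext l; simp [Finset.sum_apply, Pi.single_apply]
    have : ∀ v : Fin N → ℂ, U (fun _ => v) = U.toMultilinearMap.toLinearMap (fun _ => 0) 0 v := by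
      intro v
      rw [MultilinearMap.toLinearMap_apply]
      change U _ = U _
      congr 1
      funext k
      rw [Subsingleton.elim k 0]; simp
    rw [this, hss, map_sum]
    refine Finset.sum_congr rfl fun j _ => ?_
    rw [map_smul, ← this, ← hss, smul_eq_mul, mul_comm]
  have h3 : U (fun _ => s) = ((∑ j, ‖b j‖ : ℝ) : ℂ) := by
    rw [hU]; push_cast
    refine Finset.sum_congr rfl fun j _ => ?_
    simp only [hs]
    split_ifs with h
    · simp [h]
    · field_simp
  have h4 := U.le_opNorm (fun _ => s)
  rw [h3, Complex.norm_real, Real.norm_of_nonneg (by positivity)] at h4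
  refine h4.trans ?_
  simp only [Finset.prod_const, Finset.card_univ, Fintype.card_fin, pow_one]
  exact mul_le_of_le_one_right (norm_nonneg _) hs1

lemma bh_induct (hK1 : BhKh 1 (2 / √π)) (hKM : ∀ M : ℕ, 2 ≤ M → BhKh M (Real.exp (0.304975 / M))) (n : ℕ) (hn : 2 ≤ n) :
    BhC n (2 / √π * ((n : ℝ) - 1) ^ (0.304975 : ℝ)) := by
  induction n, hn using Nat.le_induction with
  | base =>
    have := bh_recursion 1 le_rfl _ 1 (by positivity) zero_le_one hK1 bh_one
    convert this using 2
    norm_num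
  | succ M hM ih =>
    have hM' : (2 : ℝ) ≤ M := by exact_mod_cast hM
    have := bh_recursion M (by omega) _ _ (Real.exp_pos _).le (by
      have : 0 ≤ (M : ℝ) - 1 := by linarith
      positivity) (hKM M hM) ih
    intro N U
    refine (this N U).trans ?_
    apply Real.rpow_le_rpow
    · have : 0 ≤ (M : ℝ) - 1 := by linarith
      positivity
    · apply mul_le_mul_of_nonneg_right _ (norm_nonneg _)
      have h1 : Real.exp (0.304975 / M) ≤ ((M : ℝ) / (M - 1)) ^ (0.304975 : ℝ) := by
        rw [Real.rpow_def_of_pos (by apply div_pos <;> linarith)]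
        apply Real.exp_le_exp.mpr
        have : 1 - ((M : ℝ) / (M - 1))⁻¹ ≤ Real.log ((M : ℝ) / (M - 1)) :=
          Real.one_sub_inv_le_log_of_pos (by apply div_pos <;> linarith)
        rw [inv_div, sub_div, div_self (by linarith)] at this
        have h5 : 0.304975 / (M : ℝ) = (1 - (1 - 1 / (M : ℝ))) * 0.304975 := by ring
        rw [h5]
        exact mul_le_mul_of_nonneg_right this (by norm_num)
      have h2 : 0 < (M : ℝ) - 1 := by linarith
      push_cast
      calc _ ≤ ((M : ℝ) / (M - 1)) ^ (0.304975 : ℝ) * (2 / √π * ((M : ℝ) - 1) ^ (0.304975 : ℝ)) :=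
            mul_le_mul_of_nonneg_right h1 (by positivity)
        _ = _ := by
            rw [Real.div_rpow (by positivity) h2.le]
            have : ((M : ℝ) - 1) ^ (0.304975 : ℝ) ≠ 0 := by positivity
            field_simp
            ring_nf
    · positivity

lemma bhNu_integral (f : ℝ → ℝ) : ∫ t, f t ∂bhNu = (2 * π)⁻¹ * ∫ t in (0:ℝ)..(2 * π), f t := by
  rw [bhNu, integral_smul_measure, intervalIntegral.integral_of_le (by positivity)]
  rw [ENNReal.toReal_inv, ENNReal.toReal_ofReal (by positivity), smul_eq_mul]

lemma bhNu_integrable {f : ℝ → ℝ} (hf : Continuous f) : Integrable f bhNu := by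
  unfold bhNu
  refine Integrable.smul_measure ?_ (by simp; positivity)
  exact (hf.integrableOn_Icc).mono_set Set.Ioc_subset_Icc_self

lemma bh_rot (g : ℝ → ℝ) (z : ℂ) :
    ∫ t, g ((z * bhE t).re) ∂bhNu = ∫ t, g (‖z‖ * cos t) ∂bhNu := by
  rw [bhNu_integral, bhNu_integral]
  congr 1
  have e : ∀ t : ℝ, (z * bhE t).re = ‖z‖ * cos (z.arg + t) := by
    intro t
    conv_lhs => rw [← Complex.norm_mul_exp_arg_mul_I z]
    rw [mul_assoc, bhE, ← Complex.exp_add, ← add_mul, ← Complex.ofReal_add]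
    rw [Complex.re_ofReal_mul, Complex.exp_ofReal_mul_I_re]
  simp only [e]
  have := intervalIntegral.integral_comp_add_left (a := 0) (b := 2 * π) (fun x => g (‖z‖ * cos x)) z.arg
  rw [this, add_zero]
  have hp : Function.Periodic (fun x => g (‖z‖ * cos x)) (2 * π) := fun x => by simp
  have := hp.intervalIntegral_add_eq z.arg 0
  rw [this, zero_add]

lemma bh_cos_pow (n : ℕ) : ∫ t, cos t ^ (n + 2) ∂bhNu = (n + 1 : ℝ) / (n + 2) * ∫ t, cos t ^ n ∂bhNu := by
  rw [bhNu_integral, bhNu_integral, integral_cos_pow]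
  simp
  ring

lemma bh_cos0 : ∫ t, cos t ^ 0 ∂bhNu = 1 := by simp
lemma bh_cos1 : ∫ t, cos t ^ 1 ∂bhNu = 0 := by simp [bhNu_integral]
lemma bh_cos2 : ∫ t, cos t ^ 2 ∂bhNu = 1 / 2 := by rw [bh_cos_pow 0, bh_cos0]; norm_num
lemma bh_cos3 : ∫ t, cos t ^ 3 ∂bhNu = 0 := by rw [bh_cos_pow 1, bh_cos1]; norm_num
lemma bh_cos4 : ∫ t, cos t ^ 4 ∂bhNu = 3 / 8 := by rw [bh_cos_pow 2, bh_cos2]; norm_num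
lemma bh_cos6 : ∫ t, cos t ^ 6 ∂bhNu = 5 / 16 := by rw [bh_cos_pow 4, bh_cos4]; norm_num
lemma bh_cos8 : ∫ t, cos t ^ 8 ∂bhNu = 35 / 128 := by rw [bh_cos_pow 6, bh_cos6]; norm_num
lemma bh_cos10 : ∫ t, cos t ^ 10 ∂bhNu = 63 / 256 := by rw [bh_cos_pow 8, bh_cos8]; norm_num

lemma bh_split {N : ℕ} (j : Fin (N + 1)) (a : Fin (N + 1) → ℂ) (F : ℂ → ℝ) (hF : Continuous F) :
    ∫ t, F (bhX a t) ∂(bhMu (N + 1)) =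
      ∫ t, ∫ θ, F (a j * bhE θ + bhX (fun k => a (j.succAbove k)) t) ∂bhNu ∂(bhMu N) := by
  have mp := (measurePreserving_piFinSuccAbove (fun _ : Fin (N + 1) => bhNu) j)
  have h1 : ∀ t, F (bhX a t) = (fun q : ℝ × (Fin N → ℝ) =>
      F (a j * bhE q.1 + bhX (fun k => a (j.succAbove k)) q.2)) (MeasurableEquiv.piFinSuccAbove (fun _ => ℝ) j t) := by
    intro t
    simp only [bhX]
    rw [Fin.sum_univ_succAbove _ j]
    rfl
  simp only [h1]
  have hc : Continuous (fun q : ℝ × (Fin N → ℝ) =>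
      F (a j * bhE q.1 + bhX (fun k => a (j.succAbove k)) q.2)) := by
    have := bhE_cont
    have := bhX_cont (fun k => a (j.succAbove k))
    fun_prop
  unfold bhMu
  refine (mp.integral_comp' (f := MeasurableEquiv.piFinSuccAbove (fun _ => ℝ) j) (fun q : ℝ × (Fin N → ℝ) =>
      F (a j * bhE q.1 + bhX (fun k => a (j.succAbove k)) q.2))).trans ?_
  refine integral_prod_symm (fun q : ℝ × (Fin N → ℝ) =>
      F (a j * bhE q.1 + bhX (fun k => a (j.succAbove k)) q.2)) ?_
  obtain ⟨C, hC⟩ := (isCompact_closedBall (0 : ℂ) (∑ j, ‖a j‖)).exists_bound_of_continuousOn hF.continuousOn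
  refine bh_integrable_bdd hc.measurable C fun q => ?_
  apply hC
  rw [mem_closedBall_zero_iff, Fin.sum_univ_succAbove _ j]
  refine (norm_add_le _ _).trans (add_le_add ?_ (bhX_norm_le _ _))
  rw [norm_mul, bhE_norm, mul_one]

lemma bh_normsq (a x : ℂ) (θ : ℝ) : ‖a * bhE θ + x‖ ^ 2 = (‖x‖ ^ 2 + ‖a‖ ^ 2) + 2 * ((a * star x) * bhE θ).re := by
  rw [← Complex.normSq_eq_norm_sq, Complex.normSq_add, Complex.normSq_eq_norm_sq, Complex.normSq_eq_norm_sq,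
    norm_mul, bhE_norm, mul_one]
  simp only [Complex.star_def]
  have : a * bhE θ * (starRingEnd ℂ) x = a * (starRingEnd ℂ) x * bhE θ := by ring
  rw [this]; ring

lemma bh_avg (g : ℝ → ℝ) (a x : ℂ) : ∫ θ, g (‖a * bhE θ + x‖ ^ 2) ∂bhNu =
    ∫ θ, g ((‖x‖ ^ 2 + ‖a‖ ^ 2) + 2 * (‖a‖ * ‖x‖) * cos θ) ∂bhNu := by
  simp only [bh_normsq]
  rw [bh_rot (fun w => g ((‖x‖ ^ 2 + ‖a‖ ^ 2) + 2 * w))]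
  simp [mul_assoc]

lemma bh_int5 {α : Type*} [MeasurableSpace α] {μ : Measure α} {f0 f1 f2 f3 f4 : α → ℝ} (h0 : Integrable f0 μ)
    (h1 : Integrable f1 μ) (h2 : Integrable f2 μ) (h3 : Integrable f3 μ) (h4 : Integrable f4 μ) :
    ∫ t, (f0 t + f1 t + f2 t + f3 t + f4 t) ∂μ =
      ∫ t, f0 t ∂μ + ∫ t, f1 t ∂μ + ∫ t, f2 t ∂μ + ∫ t, f3 t ∂μ + ∫ t, f4 t ∂μ := by
  have h01 : Integrable (fun t => f0 t + f1 t) μ := h0.add h1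
  have h02 : Integrable (fun t => f0 t + f1 t + f2 t) μ := h01.add h2
  have h03 : Integrable (fun t => f0 t + f1 t + f2 t + f3 t) μ := h02.add h3
  rw [integral_add h03 h4, integral_add h02 h3, integral_add h01 h2, integral_add h0 h1]

lemma bh_poly_avg (c0 c1 c2 c3 c4 : ℝ) : ∫ θ, (c0 + c1 * cos θ ^ 1 + c2 * cos θ ^ 2 + c3 * cos θ ^ 3 + c4 * cos θ ^ 4) ∂bhNu
    = c0 + c2 / 2 + c4 * 3 / 8 := by
  have hi : ∀ (c : ℝ) (k : ℕ), Integrable (fun θ => c * cos θ ^ k) bhNu := fun c k => bhNu_integrable (by fun_prop)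
  have h0 : Integrable (fun _ : ℝ => c0) bhNu := integrable_const _
  rw [bh_int5 h0 (hi _ _) (hi _ _) (hi _ _) (hi _ _)]
  simp only [integral_const_mul, bh_cos1, bh_cos2, bh_cos3, bh_cos4]
  simp; ring

lemma bh_m1 (a x : ℂ) : ∫ θ, ‖a * bhE θ + x‖ ^ 2 ∂bhNu = ‖x‖ ^ 2 + ‖a‖ ^ 2 := by
  rw [bh_avg (fun u => u) a x]
  have := bh_poly_avg (‖x‖ ^ 2 + ‖a‖ ^ 2) (2 * (‖a‖ * ‖x‖)) 0 0 0
  simpa using this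

lemma bh_m2 (a x : ℂ) : ∫ θ, (‖a * bhE θ + x‖ ^ 2) ^ 2 ∂bhNu =
    (‖x‖ ^ 2) ^ 2 + 4 * ‖a‖ ^ 2 * (‖x‖ ^ 2) ^ 1 + (‖a‖ ^ 2) ^ 2 := by
  rw [bh_avg (fun u => u ^ 2) a x]
  set s := ‖x‖ ^ 2 + ‖a‖ ^ 2 with hs
  set b := 2 * (‖a‖ * ‖x‖) with hb
  rw [show (fun θ => (s + b * cos θ) ^ 2) = fun θ => s ^ 2 + (2 * s * b) * cos θ ^ 1 + b ^ 2 * cos θ ^ 2 +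
    0 * cos θ ^ 3 + 0 * cos θ ^ 4 by funext θ; ring, bh_poly_avg, hs, hb]
  ring

lemma bh_m3 (a x : ℂ) : ∫ θ, (‖a * bhE θ + x‖ ^ 2) ^ 3 ∂bhNu =
    (‖x‖ ^ 2) ^ 3 + 9 * ‖a‖ ^ 2 * (‖x‖ ^ 2) ^ 2 + 9 * (‖a‖ ^ 2) ^ 2 * (‖x‖ ^ 2) ^ 1 + (‖a‖ ^ 2) ^ 3 := by
  rw [bh_avg (fun u => u ^ 3) a x]
  set s := ‖x‖ ^ 2 + ‖a‖ ^ 2 with hs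
  set b := 2 * (‖a‖ * ‖x‖) with hb
  rw [show (fun θ => (s + b * cos θ) ^ 3) = fun θ => s ^ 3 + (3 * s ^ 2 * b) * cos θ ^ 1 + 3 * s * b ^ 2 * cos θ ^ 2 +
    b ^ 3 * cos θ ^ 3 + 0 * cos θ ^ 4 by funext θ; ring, bh_poly_avg, hs, hb]
  ring

lemma bh_m4 (a x : ℂ) : ∫ θ, (‖a * bhE θ + x‖ ^ 2) ^ 4 ∂bhNu =
    (‖x‖ ^ 2) ^ 4 + 16 * ‖a‖ ^ 2 * (‖x‖ ^ 2) ^ 3 + 36 * (‖a‖ ^ 2) ^ 2 * (‖x‖ ^ 2) ^ 2 +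
      16 * (‖a‖ ^ 2) ^ 3 * (‖x‖ ^ 2) ^ 1 + (‖a‖ ^ 2) ^ 4 := by
  rw [bh_avg (fun u => u ^ 4) a x]
  set s := ‖x‖ ^ 2 + ‖a‖ ^ 2 with hs
  set b := 2 * (‖a‖ * ‖x‖) with hb
  rw [show (fun θ => (s + b * cos θ) ^ 4) = fun θ => s ^ 4 + (4 * s ^ 3 * b) * cos θ ^ 1 + 6 * s ^ 2 * b ^ 2 * cos θ ^ 2 +
    4 * s * b ^ 3 * cos θ ^ 3 + b ^ 4 * cos θ ^ 4 by funext θ; ring, bh_poly_avg, hs, hb]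
  ring

/-- moments -/
noncomputable def bhM {N : ℕ} (a : Fin N → ℂ) (k : ℕ) : ℝ := ∫ t, (‖bhX a t‖ ^ 2) ^ k ∂(bhMu N)

lemma bhX_int {N : ℕ} (a : Fin N → ℂ) (F : ℂ → ℝ) (hF : Continuous F) : Integrable (fun t => F (bhX a t)) (bhMu N) := by
  obtain ⟨C, hC⟩ := (isCompact_closedBall (0 : ℂ) (∑ j, ‖a j‖)).exists_bound_of_continuousOn hF.continuousOn
  refine bh_integrable_bdd (hF.comp (bhX_cont a)).measurable C fun q => ?_
  apply hC
  rw [mem_closedBall_zero_iff]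
  exact bhX_norm_le a q

lemma bhM_int {N : ℕ} (a : Fin N → ℂ) (c : ℝ) (k : ℕ) : Integrable (fun t => c * (‖bhX a t‖ ^ 2) ^ k) (bhMu N) :=
  bhX_int a (fun x => c * (‖x‖ ^ 2) ^ k) (by fun_prop)

lemma bhM_zero {N : ℕ} (a : Fin N → ℂ) : bhM a 0 = 1 := by simp [bhM]

lemma bhM_lin {N : ℕ} (a : Fin N → ℂ) (c0 c1 c2 c3 c4 : ℝ) :
    ∫ t, (c4 * (‖bhX a t‖ ^ 2) ^ 4 + c3 * (‖bhX a t‖ ^ 2) ^ 3 + c2 * (‖bhX a t‖ ^ 2) ^ 2 + c1 * (‖bhX a t‖ ^ 2) ^ 1 +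
      c0) ∂(bhMu N) = c4 * bhM a 4 + c3 * bhM a 3 + c2 * bhM a 2 + c1 * bhM a 1 + c0 := by
  have hi := bhM_int a
  have h0 : Integrable (fun _ : Fin N → ℝ => c0) (bhMu N) := integrable_const _
  rw [bh_int5 (hi _ _) (hi _ _) (hi _ _) (hi _ _) h0]
  simp only [integral_const_mul, bhM]
  simp

lemma bh_moments {N : ℕ} (a : Fin N → ℂ) :
    bhM a 1 = ∑ j, ‖a j‖ ^ 2 ∧ 0 ≤ 2 * (∑ j, ‖a j‖ ^ 2) ^ 2 - bhM a 2 ∧ 0 ≤ 6 * (∑ j, ‖a j‖ ^ 2) ^ 3 - bhM a 3 ∧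
    0 ≤ 75 * (∑ j, ‖a j‖ ^ 2) ^ 2 * (2 * (∑ j, ‖a j‖ ^ 2) ^ 2 - bhM a 2)
      - 12 * (∑ j, ‖a j‖ ^ 2) * (6 * (∑ j, ‖a j‖ ^ 2) ^ 3 - bhM a 3) + (24 * (∑ j, ‖a j‖ ^ 2) ^ 4 - bhM a 4) := by
  induction N with
  | zero => simp [bhM, bhX]
  | succ N ih =>
    set b : Fin N → ℂ := fun k => a ((0 : Fin (N + 1)).succAbove k) with hb
    obtain ⟨i1, i2, i3, i4⟩ := ih b
    have hT : ∑ j, ‖a j‖ ^ 2 = ‖a 0‖ ^ 2 + ∑ j, ‖b j‖ ^ 2 := by rw [Fin.sum_univ_succAbove _ 0]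
    have hT0 : 0 ≤ ∑ j, ‖b j‖ ^ 2 := Finset.sum_nonneg fun _ _ => sq_nonneg _
    have hv0 : 0 ≤ ‖a 0‖ ^ 2 := sq_nonneg _
    have sp := fun k : ℕ => bh_split 0 a (fun x => (‖x‖ ^ 2) ^ k) (by fun_prop)
    have e1 : bhM a 1 = bhM b 1 + ‖a 0‖ ^ 2 := by
      rw [bhM, sp 1]
      simp only [pow_one, bh_m1]
      have := bhM_lin b (‖a 0‖ ^ 2) 1 0 0 0
      simpa [hb] using this
    have e2 : bhM a 2 = bhM b 2 + 4 * ‖a 0‖ ^ 2 * bhM b 1 + (‖a 0‖ ^ 2) ^ 2 := by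
      rw [bhM, sp 2]
      simp only [bh_m2]
      have := bhM_lin b ((‖a 0‖ ^ 2) ^ 2) (4 * ‖a 0‖ ^ 2) 1 0 0
      simpa [hb] using this
    have e3 : bhM a 3 = bhM b 3 + 9 * ‖a 0‖ ^ 2 * bhM b 2 + 9 * (‖a 0‖ ^ 2) ^ 2 * bhM b 1 + (‖a 0‖ ^ 2) ^ 3 := by
      rw [bhM, sp 3]
      simp only [bh_m3]
      have := bhM_lin b ((‖a 0‖ ^ 2) ^ 3) (9 * (‖a 0‖ ^ 2) ^ 2) (9 * ‖a 0‖ ^ 2) 1 0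
      simpa [hb] using this
    have e4 : bhM a 4 = bhM b 4 + 16 * ‖a 0‖ ^ 2 * bhM b 3 + 36 * (‖a 0‖ ^ 2) ^ 2 * bhM b 2 +
        16 * (‖a 0‖ ^ 2) ^ 3 * bhM b 1 + (‖a 0‖ ^ 2) ^ 4 := by
      rw [bhM, sp 4]
      simp only [bh_m4]
      have := bhM_lin b ((‖a 0‖ ^ 2) ^ 4) (16 * (‖a 0‖ ^ 2) ^ 3) (36 * (‖a 0‖ ^ 2) ^ 2) (16 * ‖a 0‖ ^ 2) 1
      simpa [hb] using this
    rw [e1, e2, e3, e4, hT, i1]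
    rw [i1] at *
    generalize ∑ j, ‖b j‖ ^ 2 = T at *
    generalize ‖a 0‖ ^ 2 = v at *
    obtain ⟨D2, hD2⟩ : ∃ D2, D2 = 2 * T ^ 2 - bhM b 2 := ⟨_, rfl⟩
    obtain ⟨D3, hD3⟩ : ∃ D3, D3 = 6 * T ^ 3 - bhM b 3 := ⟨_, rfl⟩
    obtain ⟨D4, hD4⟩ : ∃ D4, D4 = 24 * T ^ 4 - bhM b 4 := ⟨_, rfl⟩
    rw [← hD2, ← hD3, ← hD4] at i4
    rw [← hD2] at i2
    rw [← hD3] at i3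
    have f2 : bhM b 2 = 2 * T ^ 2 - D2 := by linarith
    have f3 : bhM b 3 = 6 * T ^ 3 - D3 := by linarith
    have f4 : bhM b 4 = 24 * T ^ 4 - D4 := by linarith
    rw [f2, f3, f4]
    have g2 : 2 * (v + T) ^ 2 - (2 * T ^ 2 - D2 + 4 * v * T + v ^ 2) = D2 + v ^ 2 := by ring
    have g3 : 6 * (v + T) ^ 3 - (6 * T ^ 3 - D3 + 9 * v * (2 * T ^ 2 - D2) + 9 * v ^ 2 * T + v ^ 3) =
      D3 + 9 * v * D2 + 9 * T * v ^ 2 + 5 * v ^ 3 := by ring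
    refine ⟨by ring, ?_, ?_, ?_⟩
    · rw [g2]; positivity
    · rw [g3]; positivity
    · rw [g2, g3]
      have : 0 ≤ (75 * T ^ 2 * D2 - 12 * T * D3 + D4) + 4 * v * D3 + (75 - 108 + 36) * v ^ 2 * D2 + (150 - 108) * T * v * D2
        + (75 - 108 + 72) * T ^ 2 * v ^ 2 + (150 - 108 - 60 + 80) * T * v ^ 3 + (75 - 60 + 23) * v ^ 4 := by
        have := mul_nonneg hv0 i3
        have := mul_nonneg (sq_nonneg v) i2
        have := mul_nonneg (mul_nonneg hT0 hv0) i2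
        have : 0 ≤ T ^ 2 * v ^ 2 := by positivity
        have : 0 ≤ T * v ^ 3 := by positivity
        have : 0 ≤ v ^ 4 := by positivity
        linarith
      refine this.trans (le_of_eq ?_)
      ring

lemma bhX_smul {N : ℕ} (c : ℂ) (a : Fin N → ℂ) (t : Fin N → ℝ) : bhX (fun j => c * a j) t = c * bhX a t := by
  simp only [bhX, Finset.mul_sum, mul_assoc]

lemma bh_cube_le (x : ℝ) (hx : 0 ≤ x) :
    x ^ 3 ≤ 1 / 108 * (x ^ 2) ^ 4 + (-12 / 108) * (x ^ 2) ^ 3 + 75 / 108 * (x ^ 2) ^ 2 + 44 / 108 * (x ^ 2) ^ 1 + 0 := by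
  have : 0 ≤ x ^ 2 * ((x - 1) ^ 2 * (x - 2) ^ 2 * (x ^ 2 + 6 * x + 11)) := by positivity
  nlinarith [this]

lemma bh_third {N : ℕ} (a : Fin N → ℂ) (ha : ∑ j, ‖a j‖ ^ 2 = 1) : ∫ t, ‖bhX a t‖ ^ 3 ∂(bhMu N) ≤ 73 / 54 := by
  obtain ⟨h1, h2, h3, h4⟩ := bh_moments a
  rw [ha] at h1 h2 h3 h4
  have := bhM_lin a 0 (44 / 108) (75 / 108) (-12 / 108) (1 / 108)
  calc _ ≤ _ := integral_mono (bhX_int a (fun x => ‖x‖ ^ 3) (by fun_prop))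
        (bhX_int a (fun x => 1 / 108 * (‖x‖ ^ 2) ^ 4 + (-12 / 108) * (‖x‖ ^ 2) ^ 3 + 75 / 108 * (‖x‖ ^ 2) ^ 2 +
          44 / 108 * (‖x‖ ^ 2) ^ 1 + 0) (by fun_prop)) (fun t => bh_cube_le ‖bhX a t‖ (norm_nonneg _))
    _ = _ := this
    _ ≤ _ := by rw [h1]; linarith

lemma bhKh_of_unit (M : ℕ) (hM : 1 ≤ M) (A : ℝ) (hA : 0 ≤ A) (h : ∀ (N : ℕ) (a : Fin N → ℂ), ∑ j, ‖a j‖ ^ 2 = 1 →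
    1 ≤ A ^ ((2 * M : ℝ) / (M + 1)) * ∫ t, ‖bhX a t‖ ^ ((2 * M : ℝ) / (M + 1)) ∂(bhMu N)) : BhKh M A := by
  intro N a
  have hM0 : (0 : ℝ) < M := by exact_mod_cast hM
  set T := ∑ j, ‖a j‖ ^ 2 with hT
  have hT0 : 0 ≤ T := Finset.sum_nonneg fun _ _ => sq_nonneg _
  rcases hT0.eq_or_lt with h0 | hpos
  · rw [← h0, Real.zero_rpow (by positivity)]
    apply mul_nonneg (by positivity)
    exact integral_nonneg fun t => by positivity
  set c : ℝ := √T with hc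
  have hc0 : 0 < c := Real.sqrt_pos.mpr hpos
  have h1 := h N (fun j => (c⁻¹ : ℝ) * a j) (by
    simp only [norm_mul, mul_pow, Complex.norm_real]
    rw [← Finset.mul_sum, ← hT, Real.norm_of_nonneg (by positivity), inv_pow, Real.sq_sqrt hT0]
    field_simp)
  simp only [bhX_smul, norm_mul, Complex.norm_real, Real.norm_of_nonneg (inv_nonneg.mpr hc0.le)] at h1
  simp_rw [fun t => Real.mul_rpow (z := (2 * M : ℝ) / (M + 1)) (inv_nonneg.mpr hc0.le) (norm_nonneg (bhX a t))] at h1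
  rw [integral_const_mul, Real.inv_rpow hc0.le] at h1
  have e : T ^ ((M : ℝ) / (M + 1)) = c ^ ((2 * M : ℝ) / (M + 1)) := by
    rw [hc, Real.sqrt_eq_rpow, ← Real.rpow_mul hT0]; congr 1; field_simp
  rw [e]
  have hcp : 0 < c ^ ((2 * M : ℝ) / (M + 1)) := by positivity
  calc _ = c ^ ((2 * M : ℝ) / (M + 1)) * 1 := by ring
    _ ≤ _ := mul_le_mul_of_nonneg_left h1 hcp.le
    _ = _ := by field_simp

lemma bhKh_ge_two (M : ℕ) (hM : 2 ≤ M) : BhKh M (Real.exp (0.304975 / M)) := by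
  apply bhKh_of_unit M (by omega) _ (Real.exp_pos _).le
  intro N a ha
  have hM0 : (0 : ℝ) < M := by exact_mod_cast (show 0 < M by omega)
  set p : ℝ := (2 * M : ℝ) / (M + 1) with hp
  set B : ℝ := Real.exp 0.304975 with hB
  have hB0 : 0 < B := Real.exp_pos _
  have hB1 : 73 / 54 ≤ B := by
    have := Real.sum_le_exp_of_nonneg (x := 0.304975) (by norm_num) 4
    refine le_trans ?_ this
    simp [Finset.sum_range_succ, Nat.factorial]; norm_num
  have ec : Real.exp (0.304975 / M) ^ p = B ^ (2 / (M + 1 : ℝ)) := by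
    rw [hB, ← Real.exp_mul, ← Real.exp_mul]; congr 1; rw [hp]; field_simp
  rw [ec]
  set c := B ^ (2 / (M + 1 : ℝ)) with hc
  have hc0 : 0 < c := by positivity
  set α : ℝ := (M + 1) / (M + 3) with hα
  set β : ℝ := 2 / (M + 3) with hβ
  have hα0 : 0 < α := by positivity
  have hβ0 : 0 < β := by positivity
  have hab : α + β = 1 := by rw [hα, hβ]; field_simp; ring
  have young : ∀ x : ℝ, 0 ≤ x → x ^ 2 ≤ α * c * x ^ p + β / B * x ^ 3 := by
    intro x hx
    rcases hx.eq_or_lt with h0 | hpos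
    · rw [← h0]; rw [Real.zero_rpow (by positivity)]; norm_num
    have := Real.geom_mean_le_arith_mean2_weighted hα0.le hβ0.le (show 0 ≤ c * x ^ p by positivity)
      (show 0 ≤ x ^ 3 / B by positivity) hab
    refine le_trans (le_of_eq ?_) (this.trans (le_of_eq (by ring)))
    rw [Real.mul_rpow hc0.le (by positivity), Real.div_rpow (by positivity) hB0.le, hc, ← Real.rpow_mul hB0.le,
      ← Real.rpow_mul hpos.le, ← Real.rpow_natCast x 3, ← Real.rpow_mul hpos.le]
    have e1 : 2 / (M + 1 : ℝ) * α = β := by rw [hα, hβ]; field_simp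
    rw [e1]
    have : B ^ β ≠ 0 := by positivity
    calc x ^ 2 = x ^ (p * α + ((3 : ℕ) : ℝ) * β) := by
          rw [← Real.rpow_natCast x 2]
          congr 1
          rw [hp, hα, hβ]; push_cast; field_simp
      _ = x ^ (p * α) * x ^ (((3 : ℕ) : ℝ) * β) := Real.rpow_add hpos _ _
      _ = _ := by field_simp
  have hp0 : 0 ≤ p := by positivity
  have i1 := bhX_rpow_int a p hp0
  have i3 := bhX_int a (fun x => ‖x‖ ^ 3) (by fun_prop)
  have m1 : ∫ t, ‖bhX a t‖ ^ 2 ∂(bhMu N) = 1 := by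
    have := (bh_moments a).1
    simp only [bhM, pow_one] at this
    rw [this, ha]
  have key : ∫ t, ‖bhX a t‖ ^ 2 ∂(bhMu N) ≤ α * c * ∫ t, ‖bhX a t‖ ^ p ∂(bhMu N) + β / B * ∫ t, ‖bhX a t‖ ^ 3 ∂(bhMu N) := by
    rw [← integral_const_mul, ← integral_const_mul, ← integral_add (i1.const_mul _) (i3.const_mul _)]
    exact integral_mono (bhX_int a (fun x => ‖x‖ ^ 2) (by fun_prop)) ((i1.const_mul _).add (i3.const_mul _))
      (fun t => young _ (norm_nonneg _))
  have t3 := bh_third a ha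
  rw [m1] at key
  have : β / B * ∫ t, ‖bhX a t‖ ^ 3 ∂(bhMu N) ≤ β := by
    rw [div_mul_eq_mul_div, div_le_iff₀ hB0]
    exact mul_le_mul_of_nonneg_left (t3.trans hB1) hβ0.le
  have h6 : α * 1 ≤ α * (c * ∫ t, ‖bhX a t‖ ^ p ∂(bhMu N)) := by rw [← mul_assoc]; linarith
  exact le_of_mul_le_mul_left h6 hα0

lemma bh_sqrt_one_sub_cos : ∫ θ, √(1 - cos θ) ∂bhNu = 2 * √2 / π := by
  rw [bhNu_integral]
  have h : ∀ t ∈ Set.uIcc 0 (2 * π), √(1 - cos t) = √2 * sin (t / 2) := by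
    intro t ht
    rw [Set.uIcc_of_le (by positivity)] at ht
    have hs : 0 ≤ sin (t / 2) := sin_nonneg_of_nonneg_of_le_pi (by linarith [ht.1]) (by linarith [ht.2])
    have : 1 - cos t = 2 * sin (t / 2) ^ 2 := by
      have := Real.cos_two_mul (t / 2)
      rw [show 2 * (t / 2) = t by ring] at this
      rw [this]; have := Real.sin_sq_add_cos_sq (t / 2); linarith
    rw [this, Real.sqrt_mul (by norm_num), Real.sqrt_sq hs]
  rw [intervalIntegral.integral_congr h, intervalIntegral.integral_const_mul,
    intervalIntegral.integral_comp_div (fun x => sin x) (by norm_num), integral_sin]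
  simp
  field_simp
  norm_num

lemma bh_sigma_sq (x : ℝ) (hx : x ^ 2 ≤ 1) : (√(1 + x) + √(1 - x)) / 2 = √((1 + √(1 - x ^ 2)) / 2) := by
  have h1 : 0 ≤ 1 + x := by nlinarith
  have h2 : 0 ≤ 1 - x := by nlinarith
  symm
  rw [Real.sqrt_eq_iff_mul_self_eq (by positivity) (by positivity)]
  have e : √(1 - x ^ 2) = √(1 + x) * √(1 - x) := by
    rw [← Real.sqrt_mul h1]; congr 1; ring
  rw [e]
  nlinarith [Real.mul_self_sqrt h1, Real.mul_self_sqrt h2]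

lemma bh_conc (l s y : ℝ) (hl : 0 ≤ l) (hl1 : l ≤ 1) (hy : 0 ≤ y) (h : 1 - l + l * s ^ 2 ≤ y) : 1 - l + l * s ≤ √y := by
  apply Real.le_sqrt_of_sq_le
  nlinarith [mul_nonneg (mul_nonneg hl (sub_nonneg.mpr hl1)) (sq_nonneg (s - 1))]

lemma bh_sigma (r x : ℝ) (hr : r ^ 2 ≤ 1) (hx : x ^ 2 ≤ 1) :
    1 - r ^ 2 + r ^ 2 * ((√(1 + x) + √(1 - x)) / 2) ≤ (√(1 + r * x) + √(1 - r * x)) / 2 := by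
  have hrx : (r * x) ^ 2 ≤ 1 := by rw [mul_pow]; nlinarith [sq_nonneg r, sq_nonneg x]
  rw [bh_sigma_sq x hx, bh_sigma_sq _ hrx]
  apply bh_conc _ _ _ (sq_nonneg r) hr (by positivity)
  rw [Real.sq_sqrt (by positivity)]
  have := bh_conc (r ^ 2) (√(1 - x ^ 2)) (1 - (r * x) ^ 2) (sq_nonneg r) hr (by linarith) (by
    rw [Real.sq_sqrt (by linarith)]; apply le_of_eq; ring)
  linarith

lemma bh_sym (g : ℝ → ℝ) : ∫ θ, g (-cos θ) ∂bhNu = ∫ θ, g (cos θ) ∂bhNu := by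
  have := bh_rot g (-1)
  simpa [bhE, Complex.exp_ofReal_mul_I_re] using this

lemma bh_avg_rho (r : ℝ) (hr : r ^ 2 ≤ 1) : 1 - r ^ 2 + r ^ 2 * (2 * √2 / π) ≤ ∫ θ, √(1 + r * cos θ) ∂bhNu := by
  have i1 : ∀ r : ℝ, Integrable (fun θ => √(1 + r * cos θ)) bhNu := fun r => bhNu_integrable (by fun_prop)
  have i2 : ∀ r : ℝ, Integrable (fun θ => √(1 - r * cos θ)) bhNu := fun r => bhNu_integrable (by fun_prop)
  have e : ∀ r : ℝ, ∫ θ, √(1 - r * cos θ) ∂bhNu = ∫ θ, √(1 + r * cos θ) ∂bhNu := by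
    intro r
    have := bh_sym (fun x => √(1 + r * x))
    rw [← this]
    congr 1; funext θ; congr 1; ring
  have e2 : ∀ r : ℝ, ∫ θ, (√(1 + r * cos θ) + √(1 - r * cos θ)) / 2 ∂bhNu = ∫ θ, √(1 + r * cos θ) ∂bhNu := by
    intro r
    rw [integral_div, integral_add (i1 r) (i2 r), e]; ring
  rw [← e2]
  have e3 := e2 1
  have e4 := e 1
  simp only [one_mul] at e3 e4
  rw [← e4, bh_sqrt_one_sub_cos] at e3
  rw [← e3, ← integral_const_mul]
  have e5 : (1 - r ^ 2) = ∫ θ, (1 - r ^ 2) ∂bhNu := by simp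
  have j1 : Integrable (fun θ => r ^ 2 * ((√(1 + cos θ) + √(1 - cos θ)) / 2)) bhNu := bhNu_integrable (by fun_prop)
  conv_lhs => rw [e5]
  rw [← integral_add (integrable_const _) j1]
  refine integral_mono ((integrable_const _).add j1) (bhNu_integrable (by fun_prop)) (fun θ => ?_)
  exact bh_sigma r (cos θ) hr (Real.cos_sq_le_one θ)

lemma bh_eta : (0.9003 : ℝ) ≤ 2 * √2 / π := by
  rw [le_div_iff₀ Real.pi_pos]
  have h1 : (1.41421 : ℝ) ≤ √2 := Real.le_sqrt_of_sq_le (by norm_num)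
  have h2 := Real.pi_lt_d4
  nlinarith

lemma bh_polyw (w : ℝ) (hw : 1 ≤ w) :
    0.945 + 0.338 * (w ^ 2 - 1) - 0.013 * (w ^ 2 - 1) ^ 2 ≤ w - 0.3988 * (w ^ 2 - 1) / w ^ 3 := by
  have hw3 : 0 < w ^ 3 := by positivity
  rw [le_sub_iff_add_le, ← le_sub_iff_add_le', div_le_iff₀ hw3]
  obtain ⟨t, ht, rfl⟩ : ∃ t : ℝ, 0 ≤ t ∧ w = 1 + t := ⟨w - 1, by linarith, by ring⟩
  have h1 : 0 ≤ (t - 0.345) ^ 2 * (t - 1.371) ^ 2 * (0.013 * t ^ 3 + 0.1356 * t ^ 2 + 0.3238 * t + 0.2399) := by positivity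
  have h2 := pow_nonneg ht 2
  have h3 := pow_nonneg ht 3
  have h4 := pow_nonneg ht 4
  have h5 := pow_nonneg ht 5
  have h6 := pow_nonneg ht 6
  nlinarith [h1]

lemma bh_inner (a x : ℂ) (ha : ‖a‖ = 1) :
    0.945 + 0.338 * ‖x‖ ^ 2 - 0.013 * (‖x‖ ^ 2) ^ 2 ≤ ∫ θ, ‖a * bhE θ + x‖ ∂bhNu := by
  have e : ∫ θ, ‖a * bhE θ + x‖ ∂bhNu = ∫ θ, √((‖x‖ ^ 2 + ‖a‖ ^ 2) + 2 * (‖a‖ * ‖x‖) * cos θ) ∂bhNu := by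
    rw [← bh_avg (fun u => √u)]
    simp only [Real.sqrt_sq (norm_nonneg _)]
  rw [e, ha]
  set y := ‖x‖ with hy
  have hy0 : 0 ≤ y := norm_nonneg _
  set S := y ^ 2 + 1 ^ 2 with hS
  have hS1 : 1 ≤ S := by rw [hS]; nlinarith
  set w := √S with hw
  have hw1 : 1 ≤ w := Real.one_le_sqrt.mpr hS1
  have hwS : w ^ 2 = S := Real.sq_sqrt (by linarith)
  set r := 2 * y / S with hr
  have hrr : r ^ 2 ≤ 1 := by
    rw [hr, div_pow, div_le_one (by positivity)]
    nlinarith [sq_nonneg (y ^ 2 - 1)]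
  have e2 : ∀ θ, √(S + 2 * (1 * y) * cos θ) = w * √(1 + r * cos θ) := by
    intro θ
    rw [hw, ← Real.sqrt_mul (by linarith)]
    congr 1
    rw [hr]; field_simp
  simp only [e2]
  rw [integral_const_mul]
  have h1 := bh_avg_rho r hrr
  have h2 := bh_eta
  have h3 : 1 - 0.0997 * r ^ 2 ≤ ∫ θ, √(1 + r * cos θ) ∂bhNu := by nlinarith [sq_nonneg r]
  have h4 := bh_polyw w hw1
  have h5 : w ^ 2 - 1 = y ^ 2 := by rw [hwS, hS]; ring
  rw [h5] at h4
  refine h4.trans (le_trans (le_of_eq ?_) (mul_le_mul_of_nonneg_left h3 (by linarith)))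
  rw [hr, ← hwS]
  have : w ≠ 0 := by positivity
  field_simp
  ring

lemma bh_caseA_poly (τ : ℝ) (h0 : 0 ≤ τ) (h1 : τ ≤ 1) : √π / 2 * √(1 + τ) ≤ 0.945 + 0.338 * τ - 0.013 * (2 * τ ^ 2) := by
  have e : √π / 2 * √(1 + τ) = √(π / 4 * (1 + τ)) := by
    rw [Real.sqrt_mul (by positivity), Real.sqrt_div' _ (by norm_num)]
    congr 2
    rw [show (4 : ℝ) = 2 ^ 2 by norm_num, Real.sqrt_sq (by norm_num)]
  rw [e]
  apply Real.sqrt_le_iff.mpr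
  have := Real.pi_lt_d4
  constructor
  · nlinarith
  · nlinarith [mul_nonneg h0 (sub_nonneg.mpr h1), mul_nonneg (mul_nonneg h0 h0) (sub_nonneg.mpr h1), sq_nonneg τ,
      mul_nonneg h0 (sq_nonneg τ), sq_nonneg (τ ^ 2), sq_nonneg (τ - 0.7)]

lemma bh_caseA_unit {N : ℕ} (j : Fin (N + 1)) (a : Fin (N + 1) → ℂ) (ha : ‖a j‖ = 1)
    (hτ : ∑ k, ‖a (j.succAbove k)‖ ^ 2 ≤ 1) :
    √π / 2 * √(∑ k, ‖a k‖ ^ 2) ≤ ∫ t, ‖bhX a t‖ ∂(bhMu (N + 1)) := by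
  rw [Fin.sum_univ_succAbove _ j, ha, one_pow, bh_split j a (fun x => ‖x‖) (by fun_prop)]
  set b : Fin N → ℂ := fun k => a (j.succAbove k) with hb
  set τ := ∑ k, ‖a (j.succAbove k)‖ ^ 2 with hτd
  have h0 : 0 ≤ τ := Finset.sum_nonneg fun _ _ => sq_nonneg _
  refine (bh_caseA_poly τ h0 hτ).trans ?_
  obtain ⟨m1, m2, -, -⟩ := bh_moments b
  have m1' : bhM b 1 = τ := m1
  have m2' : 0 ≤ 2 * τ ^ 2 - bhM b 2 := m2
  have := bhM_lin b 0.945 0.338 (-0.013) 0 0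
  calc _ ≤ 0 * bhM b 4 + 0 * bhM b 3 + -0.013 * bhM b 2 + 0.338 * bhM b 1 + 0.945 := by rw [m1']; linarith
    _ = _ := this.symm
    _ ≤ _ := by
      refine integral_mono (bhX_int b (fun x => 0 * (‖x‖ ^ 2) ^ 4 + 0 * (‖x‖ ^ 2) ^ 3 + -0.013 * (‖x‖ ^ 2) ^ 2 +
        0.338 * (‖x‖ ^ 2) ^ 1 + 0.945) (by fun_prop)) ?_ (fun t => ?_)
      · refine bhX_int b (fun x => ∫ θ, ‖a j * bhE θ + x‖ ∂bhNu) ?_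
        have hE := bhE_cont
        have hi : ∀ x : ℂ, Integrable (fun θ => ‖a j * bhE θ + x‖) bhNu := fun x => bhNu_integrable (by fun_prop)
        have : LipschitzWith 1 (fun x => ∫ θ, ‖a j * bhE θ + x‖ ∂bhNu) := by
          refine LipschitzWith.mk_one fun x y => ?_
          rw [Real.dist_eq, ← integral_sub (hi x) (hi y), dist_eq_norm]
          have h := norm_integral_le_of_norm_le_const (μ := bhNu) (f := fun θ => ‖a j * bhE θ + x‖ - ‖a j * bhE θ + y‖)
            (C := ‖x - y‖) (Filter.Eventually.of_forall fun θ => by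
              refine (abs_norm_sub_norm_le _ _).trans (le_of_eq ?_)
              congr 1; ring)
          simpa using h
        exact this.continuous
      · refine le_trans (le_of_eq ?_) (bh_inner (a j) (bhX b t) ha)
        ring

lemma bh_caseA {N : ℕ} (j : Fin N) (a : Fin N → ℂ) (ha : ∑ k, ‖a k‖ ^ 2 ≤ 2 * ‖a j‖ ^ 2) (h0 : a j ≠ 0) :
    √π / 2 * √(∑ k, ‖a k‖ ^ 2) ≤ ∫ t, ‖bhX a t‖ ∂(bhMu N) := by
  cases N with
  | zero => exact j.elim0
  | succ N =>
    have hn : 0 < ‖a j‖ := norm_pos_iff.mpr h0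
    have h := bh_caseA_unit j (fun k => ((‖a j‖⁻¹ : ℝ) : ℂ) * a k) (by
      rw [norm_mul, Complex.norm_real, norm_inv, norm_norm]; field_simp) (by
      simp only [norm_mul, mul_pow, Complex.norm_real, norm_inv, norm_norm]
      rw [← Finset.mul_sum, inv_pow, inv_mul_le_iff₀ (by positivity)]
      rw [Fin.sum_univ_succAbove _ j] at ha
      linarith)
    simp only [bhX_smul, norm_mul, mul_pow, Complex.norm_real, norm_inv, norm_norm] at h
    rw [← Finset.mul_sum, integral_const_mul, Real.sqrt_mul (by positivity), Real.sqrt_sq (by positivity)] at h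
    have := mul_le_mul_of_nonneg_left h hn.le
    field_simp at this
    linarith

lemma bh_one_sub_cos_bound (c R t : ℝ) (hc : |c| ≤ R) (ht : t ≠ 0) : |(1 - cos (t * c)) / t ^ 2| ≤ (R ^ 2 / 2 + 2) * (1 + t ^ 2)⁻¹ := by
  have h1 := Real.one_sub_sq_div_two_le_cos (x := t * c)
  have h2 := Real.neg_one_le_cos (t * c)
  have h3 := Real.cos_le_one (t * c)
  have hc2 : c ^ 2 ≤ R ^ 2 := sq_le_sq' (by linarith [neg_abs_le c]) (by linarith [le_abs_self c])
  have ht2 : 0 < t ^ 2 := by positivity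
  rw [abs_of_nonneg (div_nonneg (by linarith) ht2.le), div_le_iff₀ ht2, mul_assoc, inv_mul_eq_div, ← mul_div_assoc,
    le_div_iff₀ (by positivity)]
  nlinarith [mul_le_mul_of_nonneg_left hc2 ht2.le]

lemma bh_inv_int (K : ℝ) : IntegrableOn (fun t : ℝ => K * (1 + t ^ 2)⁻¹) (Set.Ioi 0) :=
  (integrable_inv_one_add_sq.const_mul K).integrableOn

lemma bh_int_of_bound {f : ℝ → ℝ} (hf : Measurable f) (K : ℝ) (h : ∀ t, 0 < t → |f t| ≤ K * (1 + t ^ 2)⁻¹) :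
    IntegrableOn f (Set.Ioi 0) := by
  refine Integrable.mono' (bh_inv_int K) hf.aestronglyMeasurable ?_
  exact (ae_restrict_iff' measurableSet_Ioi).mpr (Filter.Eventually.of_forall fun t ht => h t ht)

lemma bh_c1_int (c : ℝ) : IntegrableOn (fun t : ℝ => (1 - cos (t * c)) / t ^ 2) (Set.Ioi 0) :=
  bh_int_of_bound (by fun_prop) _ fun t ht => bh_one_sub_cos_bound c |c| t le_rfl ht.ne'

lemma bh_laplace (x : ℝ) (hx : 0 < x) : ∫ t in Set.Ioi (0:ℝ), x * exp (-(t * x)) * (1 - cos t) = (1 + x ^ 2)⁻¹ := by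
  have h1 := integral_exp_mul_complex_Ioi (a := -(x : ℂ)) (by simpa using hx) 0
  have h2 := integral_exp_mul_complex_Ioi (a := -(x : ℂ) + Complex.I) (by simpa using hx) 0
  have i1 := integrableOn_exp_mul_complex_Ioi (a := -(x : ℂ)) (by simpa using hx) 0
  have i2 := integrableOn_exp_mul_complex_Ioi (a := -(x : ℂ) + Complex.I) (by simpa using hx) 0
  have h3 := integral_sub i1 i2
  rw [h1, h2] at h3
  have h4 := congrArg Complex.re h3
  have i12 : IntegrableOn (fun y : ℝ => Complex.exp (-(x:ℂ) * y) - Complex.exp ((-(x:ℂ) + Complex.I) * y)) (Set.Ioi 0) :=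
    i1.sub i2
  rw [← RCLike.re_eq_complex_re, ← integral_re i12] at h4
  have e : ∀ t : ℝ, x * exp (-(t * x)) * (1 - cos t) = x * RCLike.re (Complex.exp (-(x:ℂ) * t) - Complex.exp ((-(x:ℂ) + Complex.I) * t)) := by
    intro t
    simp only [RCLike.re_eq_complex_re, Complex.sub_re]
    have e1 : (-(x : ℂ)) * t = ((-(t * x) : ℝ) : ℂ) := by push_cast; ring
    have e2 : (-(x : ℂ) + Complex.I) * t = ((-(t * x) : ℝ) : ℂ) + t * Complex.I := by push_cast; ring
    rw [e1, e2, Complex.exp_add, ← Complex.ofReal_exp, Complex.re_ofReal_mul, Complex.exp_ofReal_mul_I_re,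
      Complex.ofReal_re]
    ring
  simp only [e]
  rw [integral_const_mul]
  rw [h4]
  simp [Complex.div_re, Complex.normSq_apply]
  field_simp
  ring

lemma bh_gamma2 (t : ℝ) (ht : 0 < t) : ∫ x in Set.Ioi (0:ℝ), x * exp (-(t * x)) * (1 - cos t) = (1 - cos t) / t ^ 2 := by
  rw [integral_mul_const]
  have := Real.integral_rpow_mul_exp_neg_mul_Ioi (a := 2) (by norm_num) ht
  norm_num at this
  rw [this]; field_simp

lemma bh_gamma2_int (t : ℝ) (ht : 0 < t) : IntegrableOn (fun x => x * exp (-(t * x))) (Set.Ioi (0:ℝ)) := by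
  have := Real.integral_rpow_mul_exp_neg_mul_Ioi (a := 2) (by norm_num) ht
  norm_num at this
  refine Integrable.of_integral_ne_zero ?_
  rw [this]; positivity

lemma bh_c1 : ∫ t in Set.Ioi (0:ℝ), (1 - cos t) / t ^ 2 = π / 2 := by
  have hF : ∀ t x : ℝ, 0 < x → 0 ≤ x * exp (-(t * x)) * (1 - cos t) := by
    intro t x hx
    have := Real.cos_le_one t
    have : 0 ≤ 1 - cos t := by linarith
    positivity
  have hIntg : Integrable (Function.uncurry fun t x : ℝ => x * exp (-(t * x)) * (1 - cos t))
      ((volume.restrict (Set.Ioi (0:ℝ))).prod (volume.restrict (Set.Ioi (0:ℝ)))) := by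
    rw [integrable_prod_iff (by
      apply Measurable.aestronglyMeasurable; unfold Function.uncurry; fun_prop)]
    constructor
    · refine (ae_restrict_iff' measurableSet_Ioi).mpr (Filter.Eventually.of_forall fun t ht => ?_)
      exact (bh_gamma2_int t ht).mul_const (1 - cos t)
    · have := bh_c1_int 1
      simp only [mul_one] at this
      refine this.congr ?_
      refine (ae_restrict_iff' measurableSet_Ioi).mpr (Filter.Eventually.of_forall fun t ht => ?_)
      simp only [Function.uncurry]
      rw [← bh_gamma2 t ht]
      refine setIntegral_congr_fun measurableSet_Ioi fun x hx => ?_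
      rw [Real.norm_of_nonneg (hF t x hx)]
  have sw := integral_integral_swap hIntg
  have e1 : ∫ t in Set.Ioi (0:ℝ), (∫ x in Set.Ioi (0:ℝ), x * exp (-(t * x)) * (1 - cos t)) = ∫ t in Set.Ioi (0:ℝ), (1 - cos t) / t ^ 2 :=
    setIntegral_congr_fun measurableSet_Ioi fun t ht => bh_gamma2 t ht
  have e2 : ∫ x in Set.Ioi (0:ℝ), (∫ t in Set.Ioi (0:ℝ), x * exp (-(t * x)) * (1 - cos t)) = ∫ x in Set.Ioi (0:ℝ), (1 + x ^ 2)⁻¹ :=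
    setIntegral_congr_fun measurableSet_Ioi fun t ht => bh_laplace t ht
  rw [← e1, sw, e2, integral_Ioi_inv_one_add_sq]
  simp

/-- scaling -/
lemma bh_scale (h : ℝ → ℝ) (c : ℝ) (hc : 0 ≤ c) :
    ∫ t in Set.Ioi (0:ℝ), (h 0 - h (t * c)) / t ^ 2 = c * ∫ t in Set.Ioi (0:ℝ), (h 0 - h t) / t ^ 2 := by
  rcases hc.eq_or_lt with h0 | hpos
  · rw [← h0]; simp
  have := integral_comp_mul_right_Ioi (fun t => (h 0 - h t) / t ^ 2) 0 hpos
  rw [zero_mul, smul_eq_mul] at this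
  have e : ∀ t, (h 0 - h (t * c)) / t ^ 2 = c ^ 2 * ((h 0 - h (t * c)) / (t * c) ^ 2) := by
    intro t; rw [mul_pow]; field_simp
  simp only [e]
  rw [integral_const_mul, this]
  field_simp

lemma bh_c1_scale (c : ℝ) : ∫ t in Set.Ioi (0:ℝ), (1 - cos (t * c)) / t ^ 2 = π / 2 * |c| := by
  have := bh_scale cos |c| (abs_nonneg c)
  rw [Real.cos_zero, bh_c1] at this
  rw [mul_comm, ← this]
  congr 1; funext t
  congr 2
  rw [← Real.cos_abs, ← Real.cos_abs (t * |c|), abs_mul, abs_mul, abs_abs]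

/-- Bessel function -/
noncomputable def bhJ (u : ℝ) : ℝ := ∫ θ, cos (u * cos θ) ∂bhNu

lemma bhJ_rot (z : ℂ) : ∫ θ, cos ((z * bhE θ).re) ∂bhNu = bhJ ‖z‖ := bh_rot cos z

lemma bh_sin_rot (z : ℂ) : ∫ θ, sin ((z * bhE θ).re) ∂bhNu = 0 := by
  rw [bh_rot sin z]
  have := bh_sym (fun x => sin (‖z‖ * x))
  simp only [mul_neg, Real.sin_neg] at this
  rw [integral_neg] at this
  linarith

lemma bhJ_zero : bhJ 0 = 1 := by simp [bhJ]

lemma bhJ_le_one (u : ℝ) : bhJ u ≤ 1 := by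
  have : bhJ u ≤ ∫ θ, (1:ℝ) ∂bhNu := integral_mono (bhNu_integrable (by fun_prop)) (integrable_const _) (fun θ => cos_le_one _)
  simpa using this

lemma bhJ_ge_neg_one (u : ℝ) : -1 ≤ bhJ u := by
  have : ∫ θ, (-1:ℝ) ∂bhNu ≤ bhJ u := integral_mono (integrable_const _) (bhNu_integrable (by fun_prop)) (fun θ => neg_one_le_cos _)
  simpa using this

lemma bhJ_cont : Continuous bhJ := by
  unfold bhJ
  refine continuous_of_dominated (bound := fun _ => 1) ?_ ?_ (integrable_const _) ?_
  · intro u; exact (show Continuous fun θ => cos (u * cos θ) by fun_prop).aestronglyMeasurable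
  · intro u; exact Filter.Eventually.of_forall fun θ => abs_cos_le_one _
  · exact Filter.Eventually.of_forall fun θ => by fun_prop

lemma bhJ_ge (u : ℝ) : 1 - u ^ 2 / 4 ≤ bhJ u := by
  have h : ∫ θ, (1 - u ^ 2 / 2 * cos θ ^ 2) ∂bhNu ≤ bhJ u := by
    refine integral_mono (bhNu_integrable (by fun_prop)) (bhNu_integrable (by fun_prop)) (fun θ => ?_)
    have := Real.one_sub_sq_div_two_le_cos (x := u * cos θ)
    simp only
    linarith [mul_pow u (cos θ) 2]
  rw [integral_sub (integrable_const _) (bhNu_integrable (by fun_prop)), integral_const_mul, bh_cos2] at h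
  simp at h; linarith

lemma bhJ_conv (a x : ℂ) : ∫ θ, bhJ ‖a * bhE θ + x‖ ∂bhNu = bhJ ‖a‖ * bhJ ‖x‖ := by
  have hE := bhE_cont
  simp only [← bhJ_rot]
  rw [integral_integral_swap]
  · have : ∀ φ : ℝ, ∫ θ, cos (((a * bhE θ + x) * bhE φ).re) ∂bhNu = bhJ ‖a‖ * cos ((x * bhE φ).re) := by
      intro φ
      have e : ∀ θ, cos (((a * bhE θ + x) * bhE φ).re) = cos ((x * bhE φ).re) * cos (((a * bhE φ) * bhE θ).re) -
          sin ((x * bhE φ).re) * sin (((a * bhE φ) * bhE θ).re) := by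
        intro θ
        rw [← Real.cos_add, ← Complex.add_re]; congr 2; ring
      simp only [e]
      rw [integral_sub (bhNu_integrable (by fun_prop)) (bhNu_integrable (by fun_prop)), integral_const_mul,
        integral_const_mul, bh_sin_rot, bhJ_rot, norm_mul, bhE_norm]
      simp; ring
    simp only [this]
    rw [integral_const_mul, bhJ_rot, bhJ_rot]
  · refine bh_integrable_bdd ?_ 1 fun q => abs_cos_le_one _
    apply Continuous.measurable
    unfold Function.uncurry
    fun_prop

lemma bhJ_prod {N : ℕ} (a : Fin N → ℂ) : ∫ t, bhJ ‖bhX a t‖ ∂(bhMu N) = ∏ j, bhJ ‖a j‖ := by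
  have hJ := bhJ_cont
  induction N with
  | zero => simp [bhX, bhJ_zero]
  | succ N ih =>
    rw [bh_split 0 a (fun x => bhJ ‖x‖) (by fun_prop)]
    simp only [bhJ_conv]
    rw [integral_const_mul, ih, Fin.prod_univ_succAbove _ 0]

lemma bh_abs_cos : ∫ θ, |cos θ| ∂bhNu = 2 / π := by
  have h := bh_rot (fun x => |x|) (-Complex.I)
  have e : ∀ t : ℝ, (-Complex.I * bhE t).re = sin t := by
    intro t; simp [bhE, Complex.exp_ofReal_mul_I_im]
  simp only [e, norm_neg, Complex.norm_I, one_mul] at h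
  rw [← h, bhNu_integral]
  have c : Continuous fun t => |sin t| := by fun_prop
  rw [← intervalIntegral.integral_add_adjacent_intervals (b := π) (c.intervalIntegrable _ _) (c.intervalIntegrable _ _)]
  have h1 : ∫ t in (0:ℝ)..π, |sin t| = ∫ t in (0:ℝ)..π, sin t := by
    apply intervalIntegral.integral_congr
    intro t ht
    rw [Set.uIcc_of_le pi_pos.le] at ht
    exact abs_of_nonneg (sin_nonneg_of_nonneg_of_le_pi ht.1 ht.2)
  have h2 : ∫ t in π..(2 * π), |sin t| = ∫ t in π..(2 * π), -sin t := by
    apply intervalIntegral.integral_congr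
    intro t ht
    rw [Set.uIcc_of_le (by linarith [pi_pos])] at ht
    refine abs_of_nonpos ?_
    have := sin_nonneg_of_nonneg_of_le_pi (x := t - π) (by linarith [ht.1]) (by linarith [ht.2])
    rw [Real.sin_sub_pi] at this; linarith
  rw [h1, h2, intervalIntegral.integral_neg, integral_sin, integral_sin]
  simp
  field_simp
  norm_num

lemma bh_div_bound (v c R t : ℝ) (hc : |c| ≤ R) (h1 : v ≤ (t * c) ^ 2 / 2) (h2 : v ≤ 2) (h0 : 0 ≤ v) :
    |v / t ^ 2| ≤ (R ^ 2 / 2 + 2) * (1 + t ^ 2)⁻¹ := by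
  rcases eq_or_ne t 0 with rfl | ht
  · simp; positivity
  have hc2 : c ^ 2 ≤ R ^ 2 := sq_le_sq' (by linarith [neg_abs_le c]) (by linarith [le_abs_self c])
  have ht2 : 0 < t ^ 2 := by positivity
  rw [abs_of_nonneg (div_nonneg (by linarith) ht2.le), div_le_iff₀ ht2, mul_assoc, inv_mul_eq_div, ← mul_div_assoc,
    le_div_iff₀ (by positivity)]
  nlinarith [mul_le_mul_of_nonneg_left hc2 ht2.le]

lemma bh_prod_int {α : Type*} [MeasurableSpace α] (μ : Measure α) [IsProbabilityMeasure μ] (F : ℝ × α → ℝ)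
    (hF : Measurable F) (K : ℝ) (h : ∀ q, |F q| ≤ K * (1 + q.1 ^ 2)⁻¹) :
    Integrable F ((volume.restrict (Set.Ioi (0:ℝ))).prod μ) := by
  have := (bh_inv_int K).mul_prod (μ := volume.restrict (Set.Ioi (0:ℝ))) (integrable_const (μ := μ) (1:ℝ))
  refine this.mono' hF.aestronglyMeasurable (Filter.Eventually.of_forall fun q => ?_)
  simpa using h q

lemma bhJ_Q1 : ∫ t in Set.Ioi (0:ℝ), (1 - bhJ t) / t ^ 2 = 1 := by
  have e : ∀ t : ℝ, (1 - bhJ t) / t ^ 2 = ∫ θ, (1 - cos (t * cos θ)) / t ^ 2 ∂bhNu := by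
    intro t
    rw [integral_div, integral_sub (integrable_const _) (bhNu_integrable (by fun_prop))]
    simp [bhJ]
  simp only [e]
  rw [integral_integral_swap]
  · simp only [bh_c1_scale]
    rw [integral_const_mul, bh_abs_cos]
    field_simp
  · refine bh_prod_int bhNu _ (by unfold Function.uncurry; fun_prop) (1 ^ 2 / 2 + 2) fun q => ?_
    refine bh_div_bound _ (cos q.2) 1 q.1 (abs_cos_le_one _) ?_ ?_ ?_
    · linarith [Real.one_sub_sq_div_two_le_cos (x := q.1 * cos q.2)]
    · linarith [neg_one_le_cos (q.1 * cos q.2)]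
    · linarith [cos_le_one (q.1 * cos q.2)]

lemma bhJ_Q (c : ℝ) (hc : 0 ≤ c) : ∫ t in Set.Ioi (0:ℝ), (1 - bhJ (t * c)) / t ^ 2 = c := by
  have := bh_scale bhJ c hc
  rwa [bhJ_zero, bhJ_Q1, mul_one] at this

lemma bhX_smul_real {N : ℕ} (t : ℝ) (ht : 0 ≤ t) (a : Fin N → ℂ) (s : Fin N → ℝ) :
    ‖bhX (fun j => (t : ℂ) * a j) s‖ = t * ‖bhX a s‖ := by
  rw [bhX_smul, norm_mul, Complex.norm_real, Real.norm_of_nonneg ht]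

/-- integral formula -/
lemma bh_formula {N : ℕ} (a : Fin N → ℂ) : ∫ s, ‖bhX a s‖ ∂(bhMu N) =
    ∫ t in Set.Ioi (0:ℝ), (1 - ∏ j, bhJ (t * ‖a j‖)) / t ^ 2 := by
  have hJ := bhJ_cont
  have hX := bhX_cont a
  have e : ∀ s, ‖bhX a s‖ = ∫ t in Set.Ioi (0:ℝ), (1 - bhJ (t * ‖bhX a s‖)) / t ^ 2 := fun s => (bhJ_Q _ (norm_nonneg _)).symm
  conv_lhs => enter [2, s]; rw [e s]
  rw [← integral_integral_swap (f := fun (t : ℝ) s => (1 - bhJ (t * ‖bhX a s‖)) / t ^ 2)]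
  · refine setIntegral_congr_fun measurableSet_Ioi fun t ht => ?_
    have ht' : 0 ≤ t := le_of_lt ht
    have h1 := bhJ_prod (fun j => (t : ℂ) * a j)
    simp only [bhX_smul_real t ht', norm_mul, Complex.norm_real, Real.norm_of_nonneg ht'] at h1
    rw [integral_div, integral_sub (integrable_const _), h1]
    · simp
    · exact bhX_int a (fun x => bhJ (t * ‖x‖)) (by fun_prop)
  · refine bh_prod_int (bhMu N) _ (by unfold Function.uncurry; fun_prop) ((∑ j, ‖a j‖) ^ 2 / 2 + 2) fun q => ?_
    refine bh_div_bound _ ‖bhX a q.2‖ _ q.1 (by rw [abs_norm]; exact bhX_norm_le _ _) ?_ ?_ ?_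
    · have := bhJ_ge (q.1 * ‖bhX a q.2‖)
      have := sq_nonneg (q.1 * ‖bhX a q.2‖)
      linarith
    · linarith [bhJ_ge_neg_one (q.1 * ‖bhX a q.2‖)]
    · linarith [bhJ_le_one (q.1 * ‖bhX a q.2‖)]

lemma bhJ_sq_int : ∫ t in Set.Ioi (0:ℝ), (1 - bhJ t ^ 2) / t ^ 2 = 4 / π := by
  have h := bh_formula (fun _ : Fin 2 => (1 : ℂ))
  simp only [norm_one, mul_one, Finset.prod_const, Finset.card_univ, Fintype.card_fin] at h
  rw [← h, bh_split 0 _ (fun x => ‖x‖) (by fun_prop)]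
  have e : ∀ t : Fin 1 → ℝ, ∫ θ, ‖1 * bhE θ + bhX (fun _ : Fin 1 => (1:ℂ)) t‖ ∂bhNu = 4 / π := by
    intro t
    have hx : ‖bhX (fun _ : Fin 1 => (1:ℂ)) t‖ = 1 := by simp [bhX, bhE_norm]
    have h2 := bh_avg (fun u => √u) 1 (bhX (fun _ : Fin 1 => (1:ℂ)) t)
    simp only [Real.sqrt_sq (norm_nonneg _)] at h2
    rw [h2, hx, norm_one]
    have e2 : ∀ θ, √(1 ^ 2 + 1 ^ 2 + 2 * (1 * 1) * cos θ) = √2 * √(1 + cos θ) := by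
      intro θ
      rw [← Real.sqrt_mul (by norm_num)]; congr 1; ring
    simp only [e2]
    rw [integral_const_mul, ← bh_sym (fun x => √(1 + x))]
    simp only [← sub_eq_add_neg]
    rw [bh_sqrt_one_sub_cos]
    have := Real.mul_self_sqrt (show (0:ℝ) ≤ 2 by norm_num)
    field_simp
    nlinarith
  simp only [e]
  simp

lemma bh_mono0 (f f' : ℝ → ℝ) (hd : ∀ x, HasDerivAt f (f' x) x) (h0 : f 0 = 0) (h : ∀ x, 0 ≤ x → 0 ≤ f' x) :
    ∀ x, 0 ≤ x → 0 ≤ f x := by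
  have hm : MonotoneOn f (Set.Ici 0) := by
    refine monotoneOn_of_deriv_nonneg (convex_Ici 0) (fun x _ => (hd x).continuousAt.continuousWithinAt)
      (fun x _ => (hd x).differentiableAt.differentiableWithinAt) fun x hx => ?_
    rw [interior_Ici] at hx
    rw [(hd x).deriv]; exact h x (le_of_lt hx)
  intro x hx
  have := hm (Set.mem_Ici.mpr le_rfl) (Set.mem_Ici.mpr hx) hx
  rwa [h0] at this

lemma bh_hp (n : ℕ) (c x : ℝ) : HasDerivAt (fun y : ℝ => y ^ (n + 1) * c) ((n + 1 : ℝ) * x ^ n * c) x := by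
  have := (hasDerivAt_pow (n + 1) x).mul_const c
  simpa using this

lemma bh_s3 : ∀ x, 0 ≤ x → 0 ≤ sin x - (x - x ^ 3 / 6) := by
  refine bh_mono0 _ (fun x => cos x - (1 - x ^ 2 / 2)) (fun x => ?_) (by simp) fun x _ => by
    linarith [Real.one_sub_sq_div_two_le_cos (x := x)]
  exact ((hasDerivAt_sin x).sub ((hasDerivAt_id' x).sub ((hasDerivAt_pow 3 x).div_const 6))).congr_deriv (by simp; ring)

lemma bh_c4 : ∀ x, 0 ≤ x → 0 ≤ (1 - x ^ 2 / 2 + x ^ 4 / 24) - cos x := by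
  refine bh_mono0 _ (fun x => sin x - (x - x ^ 3 / 6)) (fun x => ?_) (by simp) bh_s3
  exact ((((hasDerivAt_const x (1:ℝ)).sub ((hasDerivAt_pow 2 x).div_const 2)).add ((hasDerivAt_pow 4 x).div_const 24)).sub (hasDerivAt_cos x)).congr_deriv (by simp; ring)

lemma bh_s5 : ∀ x, 0 ≤ x → 0 ≤ (x - x ^ 3 / 6 + x ^ 5 / 120) - sin x := by
  refine bh_mono0 _ (fun x => (1 - x ^ 2 / 2 + x ^ 4 / 24) - cos x) (fun x => ?_) (by simp) bh_c4
  exact ((((hasDerivAt_id' x).sub ((hasDerivAt_pow 3 x).div_const 6)).add ((hasDerivAt_pow 5 x).div_const 120)).sub (hasDerivAt_sin x)).congr_deriv (by simp; ring)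

lemma bh_c6 : ∀ x, 0 ≤ x → 0 ≤ cos x - (1 - x ^ 2 / 2 + x ^ 4 / 24 - x ^ 6 / 720) := by
  refine bh_mono0 _ (fun x => (x - x ^ 3 / 6 + x ^ 5 / 120) - sin x) (fun x => ?_) (by simp) bh_s5
  exact ((hasDerivAt_cos x).sub ((((hasDerivAt_const x (1:ℝ)).sub ((hasDerivAt_pow 2 x).div_const 2)).add ((hasDerivAt_pow 4 x).div_const 24)).sub ((hasDerivAt_pow 6 x).div_const 720))).congr_deriv (by simp; ring)

lemma bh_s7 : ∀ x, 0 ≤ x → 0 ≤ sin x - (x - x ^ 3 / 6 + x ^ 5 / 120 - x ^ 7 / 5040) := by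
  refine bh_mono0 _ (fun x => cos x - (1 - x ^ 2 / 2 + x ^ 4 / 24 - x ^ 6 / 720)) (fun x => ?_) (by simp) bh_c6
  exact ((hasDerivAt_sin x).sub ((((hasDerivAt_id' x).sub ((hasDerivAt_pow 3 x).div_const 6)).add ((hasDerivAt_pow 5 x).div_const 120)).sub ((hasDerivAt_pow 7 x).div_const 5040))).congr_deriv (by simp; ring)

lemma bh_c8 : ∀ x, 0 ≤ x → 0 ≤ (1 - x ^ 2 / 2 + x ^ 4 / 24 - x ^ 6 / 720 + x ^ 8 / 40320) - cos x := by
  refine bh_mono0 _ (fun x => sin x - (x - x ^ 3 / 6 + x ^ 5 / 120 - x ^ 7 / 5040)) (fun x => ?_) (by simp) bh_s7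
  exact ((((((hasDerivAt_const x (1:ℝ)).sub ((hasDerivAt_pow 2 x).div_const 2)).add ((hasDerivAt_pow 4 x).div_const 24)).sub ((hasDerivAt_pow 6 x).div_const 720)).add ((hasDerivAt_pow 8 x).div_const 40320)).sub (hasDerivAt_cos x)).congr_deriv (by simp; ring)

lemma bh_s9 : ∀ x, 0 ≤ x → 0 ≤ (x - x ^ 3 / 6 + x ^ 5 / 120 - x ^ 7 / 5040 + x ^ 9 / 362880) - sin x := by
  refine bh_mono0 _ (fun x => (1 - x ^ 2 / 2 + x ^ 4 / 24 - x ^ 6 / 720 + x ^ 8 / 40320) - cos x) (fun x => ?_) (by simp) bh_c8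
  exact ((((((hasDerivAt_id' x).sub ((hasDerivAt_pow 3 x).div_const 6)).add ((hasDerivAt_pow 5 x).div_const 120)).sub ((hasDerivAt_pow 7 x).div_const 5040)).add ((hasDerivAt_pow 9 x).div_const 362880)).sub (hasDerivAt_sin x)).congr_deriv (by simp; ring)

lemma bh_c10 : ∀ x, 0 ≤ x → 0 ≤ cos x - (1 - x ^ 2 / 2 + x ^ 4 / 24 - x ^ 6 / 720 + x ^ 8 / 40320 - x ^ 10 / 3628800) := by
  refine bh_mono0 _ (fun x => (x - x ^ 3 / 6 + x ^ 5 / 120 - x ^ 7 / 5040 + x ^ 9 / 362880) - sin x) (fun x => ?_) (by simp) bh_s9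
  exact ((hasDerivAt_cos x).sub ((((((hasDerivAt_const x (1:ℝ)).sub ((hasDerivAt_pow 2 x).div_const 2)).add ((hasDerivAt_pow 4 x).div_const 24)).sub ((hasDerivAt_pow 6 x).div_const 720)).add ((hasDerivAt_pow 8 x).div_const 40320)).sub ((hasDerivAt_pow 10 x).div_const 3628800))).congr_deriv (by simp; ring)

/-- integral of an even polynomial in `cos θ` of degree 10 -/
lemma bh_even_poly (p0 p2 p4 p6 p8 p10 : ℝ) :
    ∫ θ, (p0 + p2 * cos θ ^ 2 + p4 * cos θ ^ 4 + p6 * cos θ ^ 6 + p8 * cos θ ^ 8 + p10 * cos θ ^ 10) ∂bhNu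
      = p0 + p2 * (1/2) + p4 * (3/8) + p6 * (5/16) + p8 * (35/128) + p10 * (63/256) := by
  have i : ∀ (c : ℝ) (k : ℕ), Integrable (fun θ => c * cos θ ^ k) bhNu := fun c k => bhNu_integrable (by fun_prop)
  have i0 : Integrable (fun _ : ℝ => p0) bhNu := bhNu_integrable (by fun_prop)
  rw [integral_add (bhNu_integrable (by fun_prop)) (bhNu_integrable (by fun_prop)),
    integral_add (bhNu_integrable (by fun_prop)) (bhNu_integrable (by fun_prop)),
    integral_add (bhNu_integrable (by fun_prop)) (bhNu_integrable (by fun_prop)),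
    integral_add (bhNu_integrable (by fun_prop)) (bhNu_integrable (by fun_prop)),
    integral_add (bhNu_integrable (by fun_prop)) (bhNu_integrable (by fun_prop))]
  simp only [integral_const_mul, bh_cos2, bh_cos4, bh_cos6, bh_cos8, bh_cos10]
  have : ∫ _ : ℝ, p0 ∂bhNu = p0 := by
    have := bh_cos0
    have h2 : ∫ θ, p0 * cos θ ^ 0 ∂bhNu = p0 := by rw [integral_const_mul]; simp
    simpa using h2
  rw [this]

lemma bh_cos_even (P : ℝ → ℝ → Prop) (h : ∀ x, 0 ≤ x → P (x ^ 2) (cos x)) (x : ℝ) : P (x ^ 2) (cos x) := by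
  have := h |x| (abs_nonneg x); rwa [sq_abs, cos_abs] at this

lemma bhJ_up4 (u : ℝ) : bhJ u ≤ 1 - u ^ 2 / 4 + u ^ 4 / 64 := by
  have e := bh_even_poly 1 (-u ^ 2 / 2) (u ^ 4 / 24) 0 0 0
  have : bhJ u ≤ _ := integral_mono (g := fun θ => 1 + -u ^ 2 / 2 * cos θ ^ 2 + u ^ 4 / 24 * cos θ ^ 4 + 0 * cos θ ^ 6 + 0 * cos θ ^ 8 + 0 * cos θ ^ 10) (bhNu_integrable (by fun_prop)) (bhNu_integrable (by fun_prop)) (fun θ => by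
    have := bh_cos_even (fun y c => 0 ≤ (1 - y / 2 + y ^ 2 / 24) - c) (fun x hx => by have := bh_c4 x hx; ring_nf at this ⊢; exact this) (u * cos θ)
    show cos (u * cos θ) ≤ 1 + -u ^ 2 / 2 * cos θ ^ 2 + u ^ 4 / 24 * cos θ ^ 4 + 0 * cos θ ^ 6 + 0 * cos θ ^ 8 + 0 * cos θ ^ 10
    ring_nf at this ⊢; linarith)
  rw [e] at this; linarith

lemma bhJ_lo6 (u : ℝ) : 1 - u ^ 2 / 4 + u ^ 4 / 64 - u ^ 6 / 2304 ≤ bhJ u := by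
  have e := bh_even_poly 1 (-u ^ 2 / 2) (u ^ 4 / 24) (-u ^ 6 / 720) 0 0
  have : _ ≤ bhJ u := integral_mono (f := fun θ => 1 + -u ^ 2 / 2 * cos θ ^ 2 + u ^ 4 / 24 * cos θ ^ 4 + -u ^ 6 / 720 * cos θ ^ 6 + 0 * cos θ ^ 8 + 0 * cos θ ^ 10) (bhNu_integrable (by fun_prop)) (bhNu_integrable (by fun_prop)) (fun θ => by
    have := bh_cos_even (fun y c => 0 ≤ c - (1 - y / 2 + y ^ 2 / 24 - y ^ 3 / 720)) (fun x hx => by have := bh_c6 x hx; ring_nf at this ⊢; exact this) (u * cos θ)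
    show _ ≤ cos (u * cos θ)
    ring_nf at this ⊢; linarith)
  rw [e] at this; linarith

lemma bhJ_up8 (u : ℝ) : bhJ u ≤ 1 - u ^ 2 / 4 + u ^ 4 / 64 - u ^ 6 / 2304 + u ^ 8 / 147456 := by
  have e := bh_even_poly 1 (-u ^ 2 / 2) (u ^ 4 / 24) (-u ^ 6 / 720) (u ^ 8 / 40320) 0
  have : bhJ u ≤ _ := integral_mono (g := fun θ => 1 + -u ^ 2 / 2 * cos θ ^ 2 + u ^ 4 / 24 * cos θ ^ 4 + -u ^ 6 / 720 * cos θ ^ 6 + u ^ 8 / 40320 * cos θ ^ 8 + 0 * cos θ ^ 10) (bhNu_integrable (by fun_prop)) (bhNu_integrable (by fun_prop)) (fun θ => by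
    have := bh_cos_even (fun y c => 0 ≤ (1 - y / 2 + y ^ 2 / 24 - y ^ 3 / 720 + y ^ 4 / 40320) - c) (fun x hx => by have := bh_c8 x hx; ring_nf at this ⊢; exact this) (u * cos θ)
    show cos (u * cos θ) ≤ 1 + -u ^ 2 / 2 * cos θ ^ 2 + u ^ 4 / 24 * cos θ ^ 4 + -u ^ 6 / 720 * cos θ ^ 6 + u ^ 8 / 40320 * cos θ ^ 8 + 0 * cos θ ^ 10
    ring_nf at this ⊢; linarith)
  rw [e] at this; linarith

lemma bhJ_lo10 (u : ℝ) : 1 - u ^ 2 / 4 + u ^ 4 / 64 - u ^ 6 / 2304 + u ^ 8 / 147456 - u ^ 10 / 14745600 ≤ bhJ u := by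
  have e := bh_even_poly 1 (-u ^ 2 / 2) (u ^ 4 / 24) (-u ^ 6 / 720) (u ^ 8 / 40320) (-u ^ 10 / 3628800)
  have : _ ≤ bhJ u := integral_mono (f := fun θ => 1 + -u ^ 2 / 2 * cos θ ^ 2 + u ^ 4 / 24 * cos θ ^ 4 + -u ^ 6 / 720 * cos θ ^ 6 + u ^ 8 / 40320 * cos θ ^ 8 + -u ^ 10 / 3628800 * cos θ ^ 10) (bhNu_integrable (by fun_prop)) (bhNu_integrable (by fun_prop)) (fun θ => by
    have := bh_cos_even (fun y c => 0 ≤ c - (1 - y / 2 + y ^ 2 / 24 - y ^ 3 / 720 + y ^ 4 / 40320 - y ^ 5 / 3628800)) (fun x hx => by have := bh_c10 x hx; ring_nf at this ⊢; exact this) (u * cos θ)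
    show _ ≤ cos (u * cos θ)
    ring_nf at this ⊢; linarith)
  rw [e] at this; linarith

/-- `J₁`, minus the derivative of `J₀` -/
noncomputable def bhJ1 (u : ℝ) : ℝ := ∫ θ, cos θ * sin (u * cos θ) ∂bhNu

lemma bh_sin_even (P : ℝ → ℝ → Prop) (h : ∀ x, 0 ≤ x → P (x ^ 2) (x * sin x)) (x : ℝ) : P (x ^ 2) (x * sin x) := by
  rcases le_total 0 x with hx | hx
  · exact h x hx
  · have := h (-x) (by linarith); simpa using this

lemma bhJ1_up (u : ℝ) : u * bhJ1 u ≤ u ^ 2 / 2 - u ^ 4 / 16 + u ^ 6 / 384 - u ^ 8 / 18432 + u ^ 10 / 1474560 := by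
  have e := bh_even_poly 0 (u ^ 2) (-u ^ 4 / 6) (u ^ 6 / 120) (-u ^ 8 / 5040) (u ^ 10 / 362880)
  have : ∫ θ, u * (cos θ * sin (u * cos θ)) ∂bhNu ≤ _ := integral_mono (g := fun θ => 0 + u ^ 2 * cos θ ^ 2 + -u ^ 4 / 6 * cos θ ^ 4 + u ^ 6 / 120 * cos θ ^ 6 + -u ^ 8 / 5040 * cos θ ^ 8 + u ^ 10 / 362880 * cos θ ^ 10) (bhNu_integrable (by fun_prop)) (bhNu_integrable (by fun_prop)) (fun θ => by
    have := bh_sin_even (fun y c => 0 ≤ (y - y ^ 2 / 6 + y ^ 3 / 120 - y ^ 4 / 5040 + y ^ 5 / 362880) - c) (fun x hx => by have := mul_nonneg hx (bh_s9 x hx); ring_nf at this ⊢; exact this) (u * cos θ)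
    show u * (cos θ * sin (u * cos θ)) ≤ 0 + u ^ 2 * cos θ ^ 2 + -u ^ 4 / 6 * cos θ ^ 4 + u ^ 6 / 120 * cos θ ^ 6 + -u ^ 8 / 5040 * cos θ ^ 8 + u ^ 10 / 362880 * cos θ ^ 10
    ring_nf at this ⊢; linarith)
  rw [e, integral_const_mul] at this; unfold bhJ1; linarith

lemma bhJ1_lo (u : ℝ) : u ^ 2 / 2 - u ^ 4 / 16 + u ^ 6 / 384 - u ^ 8 / 18432 ≤ u * bhJ1 u := by
  have e := bh_even_poly 0 (u ^ 2) (-u ^ 4 / 6) (u ^ 6 / 120) (-u ^ 8 / 5040) 0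
  have : _ ≤ ∫ θ, u * (cos θ * sin (u * cos θ)) ∂bhNu := integral_mono (f := fun θ => 0 + u ^ 2 * cos θ ^ 2 + -u ^ 4 / 6 * cos θ ^ 4 + u ^ 6 / 120 * cos θ ^ 6 + -u ^ 8 / 5040 * cos θ ^ 8 + 0 * cos θ ^ 10) (bhNu_integrable (by fun_prop)) (bhNu_integrable (by fun_prop)) (fun θ => by
    have := bh_sin_even (fun y c => 0 ≤ c - (y - y ^ 2 / 6 + y ^ 3 / 120 - y ^ 4 / 5040)) (fun x hx => by have := mul_nonneg hx (bh_s7 x hx); ring_nf at this ⊢; exact this) (u * cos θ)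
    show _ ≤ u * (cos θ * sin (u * cos θ))
    ring_nf at this ⊢; linarith)
  rw [e, integral_const_mul] at this; unfold bhJ1; linarith


lemma bhJ_deriv (u : ℝ) : HasDerivAt bhJ (-bhJ1 u) u := by
  have := (hasDerivAt_integral_of_dominated_loc_of_deriv_le (μ := bhNu) (F := fun u θ => cos (u * cos θ))
    (F' := fun u θ => -(cos θ * sin (u * cos θ))) (x₀ := u) (s := Set.univ) (bound := fun _ => 1) Filter.univ_mem
    (Filter.Eventually.of_forall fun v => (by fun_prop : Continuous fun θ => cos (v * cos θ)).aestronglyMeasurable)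
    (bhNu_integrable (by fun_prop)) ((by fun_prop : Continuous fun θ => -(cos θ * sin (u * cos θ))).aestronglyMeasurable)
    (Filter.Eventually.of_forall fun θ v _ => by
      rw [norm_neg, norm_mul]
      exact mul_le_one₀ (abs_cos_le_one _) (norm_nonneg _) (abs_sin_le_one _))
    (integrable_const _) (Filter.Eventually.of_forall fun θ v _ =>
      (((hasDerivAt_id' v).mul_const (cos θ)).cos).congr_deriv (by ring))).2
  rwa [integral_neg] at this

lemma bhJ1_deriv (u : ℝ) : HasDerivAt bhJ1 (∫ θ, cos θ ^ 2 * cos (u * cos θ) ∂bhNu) u := by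
  exact (hasDerivAt_integral_of_dominated_loc_of_deriv_le (μ := bhNu) (F := fun u θ => cos θ * sin (u * cos θ))
    (F' := fun u θ => cos θ ^ 2 * cos (u * cos θ)) (x₀ := u) (s := Set.univ) (bound := fun _ => 1) Filter.univ_mem
    (Filter.Eventually.of_forall fun v => (by fun_prop : Continuous fun θ => cos θ * sin (v * cos θ)).aestronglyMeasurable)
    (bhNu_integrable (by fun_prop)) ((by fun_prop : Continuous fun θ => cos θ ^ 2 * cos (u * cos θ)).aestronglyMeasurable)
    (Filter.Eventually.of_forall fun θ v _ => by
      rw [norm_mul, norm_pow]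
      exact mul_le_one₀ (pow_le_one₀ (norm_nonneg _) (abs_cos_le_one _)) (norm_nonneg _) (abs_cos_le_one _))
    (integrable_const _) (Filter.Eventually.of_forall fun θ v _ =>
      ((((hasDerivAt_id' v).mul_const (cos θ)).sin).const_mul (cos θ)).congr_deriv (by ring))).2

lemma bhJ_ode (u : ℝ) : u * (∫ θ, cos θ ^ 2 * cos (u * cos θ) ∂bhNu) = u * bhJ u - bhJ1 u := by
  have h : ∫ θ, (cos θ * sin (u * cos θ) - u * (sin θ ^ 2 * cos (u * cos θ))) ∂bhNu = 0 := by
    rw [bhNu_integral, intervalIntegral.integral_eq_sub_of_hasDerivAt (f := fun θ => sin θ * sin (u * cos θ))]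
    · simp
    · intro θ _
      exact ((hasDerivAt_sin θ).mul (((hasDerivAt_cos θ).const_mul u).sin)).congr_deriv (by ring)
    · exact (by fun_prop : Continuous _).intervalIntegrable _ _
  have e : ∫ θ, (cos θ * sin (u * cos θ) - u * (sin θ ^ 2 * cos (u * cos θ))) ∂bhNu
      = ∫ θ, ((cos θ * sin (u * cos θ) - u * cos (u * cos θ)) + u * (cos θ ^ 2 * cos (u * cos θ))) ∂bhNu := by
    congr 1; ext θ; rw [sin_sq]; ring
  rw [e, integral_add (bhNu_integrable (by fun_prop)) (bhNu_integrable (by fun_prop)),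
    integral_sub (bhNu_integrable (by fun_prop)) (bhNu_integrable (by fun_prop)), integral_const_mul, integral_const_mul] at h
  unfold bhJ bhJ1; linarith

lemma bhJ_energy (u : ℝ) (hu : 3.2 ≤ u) : bhJ u ^ 2 + bhJ1 u ^ 2 ≤ bhJ 3.2 ^ 2 + bhJ1 3.2 ^ 2 := by
  have hd : ∀ v, HasDerivAt (fun v => bhJ v ^ 2 + bhJ1 v ^ 2) (2 * bhJ v * (-bhJ1 v) + 2 * bhJ1 v * (∫ θ, cos θ ^ 2 * cos (v * cos θ) ∂bhNu)) v :=
    fun v => (((bhJ_deriv v).pow 2).add ((bhJ1_deriv v).pow 2)).congr_deriv (by simp)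
  have := antitoneOn_of_deriv_nonpos (convex_Ici (3.2:ℝ)) (fun x _ => (hd x).continuousAt.continuousWithinAt)
      (fun x _ => (hd x).differentiableAt.differentiableWithinAt) (fun x hx => by
        rw [interior_Ici] at hx
        have hx : (3.2:ℝ) < x := hx
        have hx0 : 0 < x := by linarith
        rw [(hd x).deriv]
        have ode := bhJ_ode x
        have : x * (2 * bhJ x * (-bhJ1 x) + 2 * bhJ1 x * (∫ θ, cos θ ^ 2 * cos (x * cos θ) ∂bhNu)) ≤ 0 := by
          have : x * (2 * bhJ x * (-bhJ1 x) + 2 * bhJ1 x * (∫ θ, cos θ ^ 2 * cos (x * cos θ) ∂bhNu)) = -2 * bhJ1 x ^ 2 := by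
            linear_combination 2 * bhJ1 x * ode
          rw [this]; nlinarith [sq_nonneg (bhJ1 x)]
        exact nonpos_of_mul_nonpos_right this hx0)
  exact this (Set.mem_Ici.mpr le_rfl) (Set.mem_Ici.mpr hu) hu

lemma bhJ_abs_far (u : ℝ) (hu : 3.2 ≤ u) : |bhJ u| ≤ 0.4216 := by
  have h := bhJ_energy u hu
  have a1 := bhJ_up8 3.2
  have a2 := bhJ_lo10 3.2
  have b1 := bhJ1_up 3.2
  have b2 := bhJ1_lo 3.2
  have c1 : bhJ 3.2 ≤ 0 := by norm_num at a1 ⊢; linarith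
  have c2 : -0.3213 ≤ bhJ 3.2 := by norm_num at a2 ⊢; linarith
  have c3 : bhJ1 3.2 ≤ 0.2635 := by norm_num at b1 ⊢; linarith
  have c4 : 0 ≤ bhJ1 3.2 := by norm_num at b2 ⊢; linarith
  have d1 : bhJ 3.2 ^ 2 ≤ 0.3213 ^ 2 := by nlinarith
  have d2 : bhJ1 3.2 ^ 2 ≤ 0.2635 ^ 2 := by nlinarith
  refine abs_le_of_sq_le_sq ?_ (by norm_num)
  nlinarith [sq_nonneg (bhJ1 u)]

lemma bhJ_abs_mid (u : ℝ) (hu : 1.85 ≤ u) (hu' : u ≤ 3.2) : |bhJ u| ≤ 0.4216 := by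
  have a1 := bhJ_up4 u
  have a2 := bhJ_lo6 u
  have hx : 0.855625 ≤ u ^ 2 / 4 := by nlinarith
  have hx' : u ^ 2 / 4 ≤ 2.56 := by nlinarith
  have e1 : 1 - u ^ 2 / 4 + u ^ 4 / 64 = 1 - (u ^ 2 / 4) + (u ^ 2 / 4) ^ 2 / 4 := by ring
  have e2 : 1 - u ^ 2 / 4 + u ^ 4 / 64 - u ^ 6 / 2304 = 1 - (u ^ 2 / 4) + (u ^ 2 / 4) ^ 2 / 4 - (u ^ 2 / 4) ^ 3 / 36 := by ring
  rw [e1] at a1; rw [e2] at a2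
  set x := u ^ 2 / 4
  rw [abs_le]
  constructor
  · have : (x - 2.56) * (x ^ 2 + 2.56 * x + 2.56 ^ 2) ≤ 0 := mul_nonpos_of_nonpos_of_nonneg (by linarith) (by positivity)
    nlinarith [mul_nonneg (sub_nonneg.mpr hx) (sub_nonneg.mpr hx'), mul_nonneg (mul_nonneg (sub_nonneg.mpr hx) (sub_nonneg.mpr hx')) (sub_nonneg.mpr hx'), sq_nonneg (x - 2.56)]
  · nlinarith [mul_nonneg (sub_nonneg.mpr hx) (sub_nonneg.mpr hx')]

lemma bh_y0 : (0.4216:ℝ) ≤ exp (-0.855625) := by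
  have h := Real.exp_one_lt_d9
  have h1 : exp (-0.855625) = exp 0.144375 / exp 1 := by rw [← exp_sub]; norm_num
  rw [h1, le_div_iff₀ (exp_pos 1)]
  have h2 := Real.quadratic_le_exp_of_nonneg (x := 0.144375) (by norm_num)
  norm_num at h h2 ⊢
  linarith

lemma bhJ_abs_large (u : ℝ) (hu : 1.85 ≤ u) : |bhJ u| ≤ exp (-0.855625) := by
  refine le_trans ?_ bh_y0
  rcases le_total u 3.2 with h | h
  · exact bhJ_abs_mid u hu h
  · exact bhJ_abs_far u h

lemma bh_exp_lo : ∀ x, 0 ≤ x → 0 ≤ exp (-x) - (1 - x + x ^ 2 / 2 - x ^ 3 / 6) := by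
  have hE : ∀ x : ℝ, HasDerivAt (fun x => exp (-x)) (-exp (-x)) x := fun x =>
    ((hasDerivAt_neg x).exp).congr_deriv (by ring)
  have h1 : ∀ x, 0 ≤ x → 0 ≤ exp (-x) - (1 - x) := fun x _ => by linarith [Real.add_one_le_exp (-x)]
  have h2 : ∀ x, 0 ≤ x → 0 ≤ (1 - x + x ^ 2 / 2) - exp (-x) := by
    refine bh_mono0 _ _ (fun x => ?_) (by simp) h1
    exact ((((hasDerivAt_const x (1:ℝ)).sub (hasDerivAt_id' x)).add ((hasDerivAt_pow 2 x).div_const 2)).sub (hE x)).congr_deriv (by simp; ring)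
  refine bh_mono0 _ _ (fun x => ?_) (by simp) h2
  exact ((hE x).sub ((((hasDerivAt_const x (1:ℝ)).sub (hasDerivAt_id' x)).add ((hasDerivAt_pow 2 x).div_const 2)).sub ((hasDerivAt_pow 3 x).div_const 6))).congr_deriv (by simp; ring)

lemma bhJ_abs_small (u : ℝ) (h0 : 0 ≤ u) (hu : u ≤ 1.85) : |bhJ u| ≤ exp (-(u ^ 2 / 4)) := by
  have a1 := bhJ_up4 u
  have a2 := bhJ_ge u
  have hx : 0 ≤ u ^ 2 / 4 := by positivity
  have hx' : u ^ 2 / 4 ≤ 0.855625 := by nlinarith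
  have e1 : 1 - u ^ 2 / 4 + u ^ 4 / 64 = 1 - (u ^ 2 / 4) + (u ^ 2 / 4) ^ 2 / 4 := by ring
  rw [e1] at a1
  have h3 := bh_exp_lo (u ^ 2 / 4) hx
  set x := u ^ 2 / 4
  rw [abs_of_nonneg (by linarith)]
  nlinarith [mul_nonneg (sq_nonneg x) (by linarith : (0:ℝ) ≤ 1.5 - x)]

lemma bh_gauss_nonneg (b t : ℝ) (hb : 0 ≤ b) : 0 ≤ 1 - exp (-b * t ^ 2) := by
  have : exp (-b * t ^ 2) ≤ 1 := exp_le_one_iff.mpr (by nlinarith [mul_nonneg hb (sq_nonneg t)])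
  linarith

lemma bh_gauss_le (b t : ℝ) : 1 - exp (-b * t ^ 2) ≤ b * t ^ 2 := by
  linarith [Real.add_one_le_exp (-b * t ^ 2)]

lemma bh_gauss_int (b : ℝ) (hb : 0 ≤ b) : IntegrableOn (fun t : ℝ => (1 - exp (-b * t ^ 2)) / t ^ 2) (Set.Ioi 0) := by
  refine bh_int_of_bound (by fun_prop) _ fun t ht => bh_div_bound _ (√(2 * b)) |√(2 * b)| t le_rfl ?_ ?_ (bh_gauss_nonneg b t hb)
  · rw [mul_pow, sq_sqrt (by positivity)]; linarith [bh_gauss_le b t]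
  · linarith [exp_pos (-b * t ^ 2)]

lemma bh_gauss (b : ℝ) (hb : 0 < b) : ∫ t in Set.Ioi (0:ℝ), (1 - exp (-b * t ^ 2)) / t ^ 2 = √(π * b) := by
  have i1 := bh_gauss_int b hb.le
  have i2 : IntegrableOn (fun t : ℝ => 2 * b * exp (-b * t ^ 2)) (Set.Ioi 0) :=
    ((integrable_exp_neg_mul_sq hb).const_mul _).integrableOn
  have h := integral_Ioi_of_hasDerivAt_of_tendsto (a := 0) (m := 0) (f := fun t : ℝ => -((1 - exp (-b * t ^ 2)) / t))
    (f' := fun t => (1 - exp (-b * t ^ 2)) / t ^ 2 - 2 * b * exp (-b * t ^ 2)) ?_ ?_ (i1.sub i2) ?_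
  · rw [integral_sub i1 i2, integral_const_mul, integral_gaussian_Ioi] at h
    have e : 2 * b * (√(π / b) / 2) = √(π * b) := by
      have : π * b = b ^ 2 * (π / b) := by field_simp
      rw [this, sqrt_mul (by positivity), sqrt_sq hb.le]; ring
    rw [e] at h
    simp at h ⊢
    linarith
  · -- continuity at 0
    have h0 : -((1 - exp (-b * 0 ^ 2)) / (0:ℝ)) = 0 := by simp
    rw [ContinuousWithinAt, h0]
    refine squeeze_zero_norm (a := fun t : ℝ => b * |t|) (fun t => ?_) ?_
    · rcases eq_or_ne t 0 with rfl | ht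
      · simp
      · rw [norm_neg, norm_div, Real.norm_of_nonneg (bh_gauss_nonneg b t hb.le), norm_eq_abs, div_le_iff₀ (abs_pos.mpr ht), mul_assoc, abs_mul_abs_self]
        have := bh_gauss_le b t
        rwa [sq] at this ⊢
    · have : Filter.Tendsto (fun t : ℝ => b * |t|) (nhds 0) (nhds (b * |(0:ℝ)|)) := (by fun_prop : Continuous fun t : ℝ => b * |t|).tendsto 0
      simp at this
      exact this.mono_left nhdsWithin_le_nhds
  · intro t ht
    have ht : t ≠ 0 := ne_of_gt ht
    have hE : HasDerivAt (fun t : ℝ => exp (-b * t ^ 2)) (exp (-b * t ^ 2) * (-b * (2 * t))) t :=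
      (((hasDerivAt_pow 2 t).const_mul (-b)).exp).congr_deriv (by simp)
    exact ((((hasDerivAt_const t (1:ℝ)).sub hE).div (hasDerivAt_id' t) ht).neg).congr_deriv (by
      simp only [Pi.sub_apply]
      field_simp; ring)
  · refine squeeze_zero_norm' (a := fun t : ℝ => t⁻¹) ?_ tendsto_inv_atTop_zero
    filter_upwards [Filter.eventually_gt_atTop 0] with t ht
    rw [norm_neg, norm_div, Real.norm_of_nonneg (bh_gauss_nonneg b t hb.le), norm_eq_abs, abs_of_pos ht, div_eq_mul_inv]
    refine mul_le_of_le_one_left (by positivity) ?_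
    linarith [exp_pos (-b * t ^ 2)]

lemma bhJ_abs_le_one (u : ℝ) : |bhJ u| ≤ 1 := abs_le.mpr ⟨bhJ_ge_neg_one u, bhJ_le_one u⟩

lemma bhJs_int (s : ℝ) (hs : 1 ≤ s) (a : ℝ) : IntegrableOn (fun t : ℝ => (1 - |bhJ (t * a)| ^ s) / t ^ 2) (Set.Ioi 0) := by
  have hJ := bhJ_cont
  refine bh_int_of_bound (by fun_prop) _ fun t ht => bh_div_bound _ (√(s / 2) * a) |√(s / 2) * a| t le_rfl ?_ ?_ ?_
  · have h1 := one_add_mul_self_le_rpow_one_add (s := |bhJ (t * a)| - 1) (by linarith [abs_nonneg (bhJ (t * a))]) hs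
    have h2 := bhJ_ge (t * a)
    have h3 := le_abs_self (bhJ (t * a))
    have e : (t * (√(s / 2) * a)) ^ 2 = s / 2 * (t * a) ^ 2 := by
      rw [mul_pow, mul_pow, sq_sqrt (by positivity)]; ring
    rw [e]
    rw [add_sub_cancel] at h1
    nlinarith
  · linarith [rpow_nonneg (abs_nonneg (bhJ (t * a))) s]
  · linarith [rpow_le_one (abs_nonneg (bhJ (t * a))) (bhJ_abs_le_one _) (by linarith : 0 ≤ s)]

lemma bh_tail : IntegrableOn (fun u : ℝ => exp (-(u ^ 2) / 2) / u ^ 2) (Set.Ioi 1.85) ∧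
    ∫ u in Set.Ioi (1.85:ℝ), exp (-(u ^ 2) / 2) / u ^ 2 ≤ 0.0195 := by
  have hd : ∀ u ∈ Set.Ici (1.85:ℝ), HasDerivAt (fun u : ℝ => -(exp (-(u ^ 2) / 2) / (u ^ 3 + 2.2 * u)))
      (exp (-(u ^ 2) / 2) * (u / (u ^ 3 + 2.2 * u) + (3 * u ^ 2 + 2.2) / (u ^ 3 + 2.2 * u) ^ 2)) u := by
    intro u hu
    have hu : (1.85:ℝ) ≤ u := hu
    have hu0 : 0 < u := by linarith
    have hne : u ^ 3 + 2.2 * u ≠ 0 := by positivity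
    have hE : HasDerivAt (fun t : ℝ => exp (-(t ^ 2) / 2)) (exp (-(u ^ 2) / 2) * (-u)) u :=
      ((((hasDerivAt_pow 2 u).neg).div_const 2).exp).congr_deriv (by simp; ring)
    have hP : HasDerivAt (fun t : ℝ => t ^ 3 + 2.2 * t) (3 * u ^ 2 + 2.2) u :=
      ((hasDerivAt_pow 3 u).add ((hasDerivAt_id' u).const_mul 2.2)).congr_deriv (by simp)
    exact ((hE.div hP hne).neg).congr_deriv (by field_simp; ring)
  have hpos : ∀ u ∈ Set.Ioi (1.85:ℝ), 0 ≤ exp (-(u ^ 2) / 2) * (u / (u ^ 3 + 2.2 * u) + (3 * u ^ 2 + 2.2) / (u ^ 3 + 2.2 * u) ^ 2) := by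
    intro u hu
    have hu : (1.85:ℝ) < u := hu
    have hu0 : 0 < u := by linarith
    positivity
  have hlim : Filter.Tendsto (fun u : ℝ => -(exp (-(u ^ 2) / 2) / (u ^ 3 + 2.2 * u))) Filter.atTop (nhds 0) := by
    refine squeeze_zero_norm' (a := fun t : ℝ => t⁻¹) ?_ tendsto_inv_atTop_zero
    filter_upwards [Filter.eventually_gt_atTop 0] with t ht
    rw [norm_neg, norm_div, Real.norm_of_nonneg (exp_pos _).le, norm_eq_abs, abs_of_pos (by positivity), inv_eq_one_div]
    gcongr
    · exact exp_le_one_iff.mpr (by nlinarith [sq_nonneg t])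
    · nlinarith [pow_pos ht 3]
  have hIntg := integrableOn_Ioi_deriv_of_nonneg' hd hpos hlim
  have hval := integral_Ioi_of_hasDerivAt_of_nonneg' hd hpos hlim
  have hle : ∀ u ∈ Set.Ioi (1.85:ℝ), exp (-(u ^ 2) / 2) / u ^ 2 ≤ exp (-(u ^ 2) / 2) * (u / (u ^ 3 + 2.2 * u) + (3 * u ^ 2 + 2.2) / (u ^ 3 + 2.2 * u) ^ 2) := by
    intro u hu
    have hu : (1.85:ℝ) < u := hu
    have hu0 : 0 < u := by linarith
    rw [div_eq_mul_inv]
    refine mul_le_mul_of_nonneg_left ?_ (exp_pos _).le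
    have e : u / (u ^ 3 + 2.2 * u) + (3 * u ^ 2 + 2.2) / (u ^ 3 + 2.2 * u) ^ 2 - (u ^ 2)⁻¹ = (0.8 * u ^ 2 - 2.64) / (u ^ 3 + 2.2 * u) ^ 2 := by
      have : u ^ 3 + 2.2 * u = u * (u ^ 2 + 2.2) := by ring
      rw [this]
      field_simp; ring
    have : 0 ≤ (0.8 * u ^ 2 - 2.64) / (u ^ 3 + 2.2 * u) ^ 2 := div_nonneg (by nlinarith) (by positivity)
    linarith
  have hi : IntegrableOn (fun u : ℝ => exp (-(u ^ 2) / 2) / u ^ 2) (Set.Ioi 1.85) := by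
    refine Integrable.mono' hIntg (by fun_prop : Measurable _).aestronglyMeasurable ?_
    refine (ae_restrict_iff' measurableSet_Ioi).mpr (Filter.Eventually.of_forall fun u hu => ?_)
    rw [Real.norm_of_nonneg (by positivity)]
    exact hle u hu
  refine ⟨hi, (setIntegral_mono_on hi hIntg measurableSet_Ioi hle).trans ?_⟩
  rw [hval]
  have h5 : exp (-(1.85 ^ 2) / 2) ≤ 0.2 := by
    have h := Real.exp_one_gt_d9
    have h1 : exp (-(1.85 ^ 2) / 2) = (exp 1 * exp 0.71125)⁻¹ := by rw [← exp_add, ← exp_neg]; norm_num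
    have h2 := Real.quadratic_le_exp_of_nonneg (x := 0.71125) (by norm_num)
    rw [h1, inv_le_comm₀ (by positivity) (by norm_num)]
    norm_num at h h2 ⊢
    nlinarith
  rw [zero_sub, neg_neg, div_le_iff₀ (by norm_num)]
  refine h5.trans (by norm_num)

lemma bh_pow_cmp (F G r : ℝ) (hF : 0 ≤ F) (hFG : F ≤ G) (hG : 1 ≤ G) (hr : 0 ≤ r) :
    G ^ 2 - F ^ 2 ≤ G ^ 2 * G ^ r - F ^ 2 * F ^ r := by
  have h1 : 1 ≤ G ^ r := one_le_rpow hG hr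
  have h2 : F ^ r ≤ G ^ r := rpow_le_rpow hF hFG hr
  have h3 : F ^ 2 ≤ G ^ 2 := pow_le_pow_left₀ hF hFG 2
  nlinarith [mul_nonneg (sub_nonneg.mpr h1) (sub_nonneg.mpr h3), mul_nonneg (sq_nonneg F) (sub_nonneg.mpr h2)]

lemma bh_main_int (s : ℝ) (hs : 2 ≤ s) : √(π * s) / 2 ≤ ∫ u in Set.Ioi (0:ℝ), (1 - |bhJ u| ^ s) / u ^ 2 := by
  set y : ℝ := exp (-0.855625) with hy
  have hy0 : 0 < y := exp_pos _
  have ig := bh_gauss_int (s / 4) (by linarith)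
  have vg := bh_gauss (s / 4) (by linarith)
  have if' := bhJs_int s (by linarith) 1
  have ig2 := bh_gauss_int (1 / 2) (by norm_num)
  have vg2 := bh_gauss (1 / 2) (by norm_num)
  have if2 := bhJs_int 2 (by norm_num) 1
  simp only [mul_one] at if' if2
  have vf2 : ∫ u in Set.Ioi (0:ℝ), (1 - |bhJ u| ^ (2:ℝ)) / u ^ 2 = 4 / π := by
    rw [← bhJ_sq_int]; congr 1; ext u; rw [rpow_two, sq_abs]
  obtain ⟨it, vt⟩ := bh_tail
  have it' : IntegrableOn ((Set.Ioi (1.85:ℝ)).indicator fun u : ℝ => exp (-(u ^ 2) / 2) / u ^ 2) (Set.Ioi 0) :=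
    (((integrable_indicator_iff measurableSet_Ioi).mpr it)).integrableOn
  have vt' : ∫ u in Set.Ioi (0:ℝ), (Set.Ioi (1.85:ℝ)).indicator (fun u : ℝ => exp (-(u ^ 2) / 2) / u ^ 2) u
      = ∫ u in Set.Ioi (1.85:ℝ), exp (-(u ^ 2) / 2) / u ^ 2 := by
    rw [setIntegral_indicator measurableSet_Ioi]
    congr 2
    rw [Set.inter_eq_right]
    exact Set.Ioi_subset_Ioi (by norm_num)
  have key : ∀ u ∈ Set.Ioi (0:ℝ), y ^ (s - 2) * (((1 - |bhJ u| ^ (2:ℝ)) / u ^ 2 - (1 - exp (-(1/2) * u ^ 2)) / u ^ 2)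
      - (Set.Ioi (1.85:ℝ)).indicator (fun u : ℝ => exp (-(u ^ 2) / 2) / u ^ 2) u)
      ≤ (1 - |bhJ u| ^ s) / u ^ 2 - (1 - exp (-(s/4) * u ^ 2)) / u ^ 2 := by
    intro u hu
    have hu : 0 < u := hu
    set f := |bhJ u|
    have hf : 0 ≤ f := abs_nonneg _
    set g := exp (-(u ^ 2 / 4)) with hg
    have hg0 : 0 < g := exp_pos _
    have eg2 : exp (-(1/2) * u ^ 2) = g ^ 2 := by rw [hg, ← exp_nat_mul]; congr 1; push_cast; ring
    have eg2' : exp (-(u ^ 2) / 2) = g ^ 2 := by rw [hg, ← exp_nat_mul]; congr 1; push_cast; ring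
    have egs : exp (-(s/4) * u ^ 2) = g ^ 2 * g ^ (s - 2) := by
      rw [← rpow_two g, ← rpow_add hg0, hg, ← exp_mul]; congr 1; ring
    have efs : f ^ s = f ^ 2 * f ^ (s - 2) := by
      rcases eq_or_lt_of_le hf with h | h
      · rw [← h, zero_rpow (by linarith)]; simp
      · rw [← rpow_two f, ← rpow_add h]; congr 1; ring
    have e1 : ∀ z, 0 ≤ z → y ^ (s - 2) * (z / y) ^ (s - 2) = z ^ (s - 2) := by
      intro z hz
      rw [← mul_rpow hy0.le (by positivity), mul_div_cancel₀ _ hy0.ne']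
    have hc : 0 < y ^ (s - 2) := rpow_pos_of_pos hy0 _
    have hu2 : 0 < u ^ 2 := by positivity
    rw [eg2, egs, efs, rpow_two]
    by_cases h : u ∈ Set.Ioi (1.85:ℝ)
    · rw [Set.indicator_of_mem h, eg2']
      have hfy : f ≤ y := bhJ_abs_large u (le_of_lt h)
      have : f ^ (s - 2) ≤ y ^ (s - 2) := rpow_le_rpow hf hfy (by linarith)
      have h3 : 0 < g ^ (s - 2) := rpow_pos_of_pos hg0 _
      rw [← sub_div, ← sub_div, ← sub_div, ← mul_div_assoc]
      gcongr
      nlinarith [mul_nonneg (sq_nonneg f) (sub_nonneg.mpr this), mul_nonneg (sq_nonneg g) h3.le]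
    · rw [Set.indicator_of_notMem h]
      have h' : u ≤ 1.85 := not_lt.mp h
      have hfg : f ≤ g := bhJ_abs_small u hu.le h'
      have hyg : y ≤ g := by rw [hg, hy]; apply exp_le_exp.mpr; nlinarith
      have := bh_pow_cmp (f / y) (g / y) (s - 2) (by positivity) (by gcongr) ((one_le_div hy0).mpr hyg) (by linarith)
      have h2 := mul_le_mul_of_nonneg_left this hc.le
      have h3 := e1 f hf
      have h4 := e1 g hg0.le
      have h5 : y ^ (s - 2) * ((g / y) ^ 2 * (g / y) ^ (s - 2) - (f / y) ^ 2 * (f / y) ^ (s - 2)) = (g ^ 2 * g ^ (s - 2) - f ^ 2 * f ^ (s - 2)) / y ^ 2 := by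
        rw [← h3, ← h4]; field_simp
      have h6 : y ^ (s - 2) * ((g / y) ^ 2 - (f / y) ^ 2) = y ^ (s - 2) * (g ^ 2 - f ^ 2) / y ^ 2 := by
        field_simp
      rw [h5, h6, div_le_div_iff_of_pos_right (by positivity)] at h2
      rw [sub_zero, ← sub_div, ← sub_div, ← mul_div_assoc]
      gcongr
      linarith
  have := setIntegral_mono_on (((if2.sub ig2).sub it').const_mul (y ^ (s - 2))) (if'.sub ig) measurableSet_Ioi key
  simp only [Pi.sub_apply] at this
  rw [integral_const_mul] at this
  have c1 := integral_sub (if2.sub ig2) it'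
  have c2 := integral_sub if2 ig2
  have c3 := integral_sub if' ig
  simp only [Pi.sub_apply] at c1 c2 c3
  rw [c1, c2, c3, vf2, vg, vg2, vt'] at this
  have hnum : 0.0195 ≤ 4 / π - √(π * (1 / 2)) := by
    have h1 := Real.pi_gt_d6
    have h2 := Real.pi_lt_d6
    have h3 : √(π * (1 / 2)) ≤ 1.25332 := by
      rw [sqrt_le_left (by norm_num)]; norm_num at h2 ⊢; linarith
    have h4 : 1.27323 ≤ 4 / π := by
      rw [le_div_iff₀ pi_pos]; norm_num at h2 ⊢; linarith
    norm_num at h3 h4 ⊢; linarith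
  have h0 : 0 ≤ y ^ (s - 2) * (4 / π - √(π * (1 / 2)) - ∫ u in Set.Ioi (1.85:ℝ), exp (-(u ^ 2) / 2) / u ^ 2) :=
    mul_nonneg (rpow_nonneg hy0.le _) (by linarith)
  have e : √(π * (s / 4)) = √(π * s) / 2 := by
    rw [show π * (s / 4) = (π * s) / 2 ^ 2 by ring, sqrt_div' _ (by norm_num), sqrt_sq (by norm_num)]
  rw [e] at this
  linarith

lemma bh_one_sub_prod {ι : Type*} (S : Finset ι) (z : ι → ℝ) (hz : ∀ i, |z i| ≤ 1) :
    |∏ i ∈ S, z i| ≤ 1 ∧ 1 - ∏ i ∈ S, z i ≤ ∑ i ∈ S, (1 - z i) := by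
  classical
  induction S using Finset.induction_on with
  | empty => simp
  | insert i S hi ih =>
    rw [Finset.prod_insert hi, Finset.sum_insert hi]
    obtain ⟨h1, h2⟩ := ih
    refine ⟨by rw [abs_mul]; exact mul_le_one₀ (hz i) (abs_nonneg _) h1, ?_⟩
    have h3 := abs_le.mp (hz i)
    have h4 := abs_le.mp h1
    nlinarith [mul_nonneg (sub_nonneg.mpr h3.2) (sub_nonneg.mpr h4.2)]

lemma bh_caseB {N : ℕ} (a : Fin N → ℂ) (h1 : ∑ j, ‖a j‖ ^ 2 = 1) (h2 : ∀ j, ‖a j‖ ^ 2 ≤ 1 / 2) :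
    √π / 2 ≤ ∫ t, ‖bhX a t‖ ∂bhMu N := by
  rw [bh_formula]
  have hJ := bhJ_cont
  have il : IntegrableOn (fun t : ℝ => (1 - ∏ j, bhJ (t * ‖a j‖)) / t ^ 2) (Set.Ioi 0) := by
    refine bh_int_of_bound (by fun_prop) _ fun t ht => bh_div_bound _ 1 1 t (by simp) ?_ ?_ ?_
    all_goals obtain ⟨k1, k2⟩ := bh_one_sub_prod Finset.univ (fun j => bhJ (t * ‖a j‖)) fun j => bhJ_abs_le_one _
    · refine k2.trans ?_
      have : ∑ j, (1 - bhJ (t * ‖a j‖)) ≤ ∑ j, t ^ 2 / 4 * ‖a j‖ ^ 2 :=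
        Finset.sum_le_sum fun j _ => by have := bhJ_ge (t * ‖a j‖); nlinarith
      rw [← Finset.mul_sum, h1] at this
      nlinarith [sq_nonneg t]
    · linarith [(abs_le.mp k1).1]
    · linarith [(abs_le.mp k1).2]
  have hs : ∀ j, a j ≠ 0 → 2 ≤ (‖a j‖ ^ 2)⁻¹ := fun j hj => by
    rw [le_inv_comm₀ (by norm_num) (by positivity)]; linarith [h2 j]
  have ir : ∀ j ∈ Finset.univ, IntegrableOn (fun t : ℝ => ‖a j‖ ^ 2 * ((1 - |bhJ (t * ‖a j‖)| ^ (‖a j‖ ^ 2)⁻¹) / t ^ 2)) (Set.Ioi 0) := by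
    intro j _
    by_cases hj : a j = 0
    · simp [hj]
    · exact (bhJs_int _ (by linarith [hs j hj]) _).const_mul _
  have hle : ∀ t ∈ Set.Ioi (0:ℝ), ∑ j, ‖a j‖ ^ 2 * ((1 - |bhJ (t * ‖a j‖)| ^ (‖a j‖ ^ 2)⁻¹) / t ^ 2) ≤ (1 - ∏ j, bhJ (t * ‖a j‖)) / t ^ 2 := by
    intro t ht
    have ht : 0 < t := ht
    have am := Real.geom_mean_le_arith_mean_weighted Finset.univ (fun j => ‖a j‖ ^ 2)
      (fun j => |bhJ (t * ‖a j‖)| ^ (‖a j‖ ^ 2)⁻¹) (fun j _ => by positivity) h1 (fun j _ => by positivity)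
    have ep : ∏ j, (|bhJ (t * ‖a j‖)| ^ (‖a j‖ ^ 2)⁻¹) ^ (‖a j‖ ^ 2) = |∏ j, bhJ (t * ‖a j‖)| := by
      rw [Finset.abs_prod]
      refine Finset.prod_congr rfl fun j _ => ?_
      by_cases hj : a j = 0
      · simp [hj, bhJ_zero]
      · rw [← rpow_mul (abs_nonneg _), inv_mul_cancel₀ (by positivity), rpow_one]
    rw [ep] at am
    have e : ∑ j, ‖a j‖ ^ 2 * ((1 - |bhJ (t * ‖a j‖)| ^ (‖a j‖ ^ 2)⁻¹) / t ^ 2)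
        = (1 - ∑ j, ‖a j‖ ^ 2 * |bhJ (t * ‖a j‖)| ^ (‖a j‖ ^ 2)⁻¹) / t ^ 2 := by
      have e2 : ∀ j, ‖a j‖ ^ 2 * ((1 - |bhJ (t * ‖a j‖)| ^ (‖a j‖ ^ 2)⁻¹) / t ^ 2)
          = (‖a j‖ ^ 2 - ‖a j‖ ^ 2 * |bhJ (t * ‖a j‖)| ^ (‖a j‖ ^ 2)⁻¹) / t ^ 2 := fun j => by ring
      simp only [e2]
      rw [← Finset.sum_div, Finset.sum_sub_distrib, h1]
    rw [e]
    gcongr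
    exact (le_abs_self _).trans am
  have := setIntegral_mono_on (integrable_finsetSum _ ir) il measurableSet_Ioi hle
  refine le_trans ?_ this
  rw [integral_finsetSum _ ir]
  have e : √π / 2 = ∑ j, ‖a j‖ ^ 2 * (√π / 2) := by rw [← Finset.sum_mul, h1, one_mul]
  rw [e]
  refine Finset.sum_le_sum fun j _ => ?_
  by_cases hj : a j = 0
  · simp [hj]
  have hn : 0 < ‖a j‖ := norm_pos_iff.mpr hj
  rw [integral_const_mul]
  refine mul_le_mul_of_nonneg_left ?_ (by positivity)
  have sc := bh_scale (fun u => |bhJ u| ^ (‖a j‖ ^ 2)⁻¹) ‖a j‖ hn.le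
  simp only [bhJ_zero, abs_one, one_rpow] at sc
  rw [sc]
  have hm := mul_le_mul_of_nonneg_left (bh_main_int _ (hs j hj)) hn.le
  refine le_trans (le_of_eq ?_) hm
  rw [sqrt_mul pi_pos.le, sqrt_inv, sqrt_sq hn.le]
  field_simp

lemma bhKh_one : BhKh 1 (2 / √π) := by
  refine bhKh_of_unit 1 (by norm_num) _ (by positivity) fun N a ha => ?_
  have e : ((2 * (1:ℕ) : ℝ) / ((1:ℕ) + 1)) = 1 := by norm_num
  rw [e]
  simp only [rpow_one]
  have hk : √π / 2 ≤ ∫ t, ‖bhX a t‖ ∂bhMu N := by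
    by_cases h : ∀ j, ‖a j‖ ^ 2 ≤ 1 / 2
    · exact bh_caseB a ha h
    · push Not at h
      obtain ⟨j, hj⟩ := h
      have := bh_caseA j a (by linarith) (fun h0 => by simp [h0] at hj; linarith)
      rwa [ha, sqrt_one, mul_one] at this
  have hp : 0 < √π := sqrt_pos.mpr pi_pos
  calc (1:ℝ) = 2 / √π * (√π / 2) := by field_simp
    _ ≤ _ := by gcongr

theorem stmt1x (hK1 : BhKh 1 (2 / √π)) (hKM : ∀ M : ℕ, 2 ≤ M → BhKh M (Real.exp (0.304975 / M))) (n : ℕ) (hn : 2 ≤ n) :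
    (∀ N : ℕ, 0 < N →
      ∀ U : ContinuousMultilinearMap ℂ (fun _ : Fin n => (Fin N → ℂ)) ℂ,
        BHcomplex n N U ≤ 2 / Real.sqrt π * ((n : ℝ) - 1) ^ (0.304975 : ℝ) * ‖U‖) ∧
    KcomplexOpt n ≤ 2 / Real.sqrt π * ((n : ℝ) - 1) ^ (0.304975 : ℝ) := by
  have hn' : (2 : ℝ) ≤ n := by exact_mod_cast hn
  have hn1 : 0 ≤ (n : ℝ) - 1 := by linarith
  have h1 : (∀ N : ℕ, 0 < N →
      ∀ U : ContinuousMultilinearMap ℂ (fun _ : Fin n => (Fin N → ℂ)) ℂ,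
        BHcomplex n N U ≤ 2 / Real.sqrt π * ((n : ℝ) - 1) ^ (0.304975 : ℝ) * ‖U‖) := by
    intro N _ U
    have h := bh_induct hK1 hKM n hn N U
    unfold BHcomplex
    calc _ ≤ ((2 / Real.sqrt π * ((n : ℝ) - 1) ^ (0.304975 : ℝ) * ‖U‖) ^ ((2 * n : ℝ) / (n + 1)))
          ^ ((n + 1 : ℝ) / (2 * n)) := by
          apply Real.rpow_le_rpow _ h (by positivity)
          exact Finset.sum_nonneg fun _ _ => by positivity
      _ = _ := by
          rw [← Real.rpow_mul (by positivity)]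
          have : (2 * n : ℝ) / (n + 1) * ((n + 1 : ℝ) / (2 * n)) = 1 := by field_simp
          rw [this, Real.rpow_one]
  refine ⟨h1, csInf_le ⟨1, fun C hC => hC.1⟩ ⟨?_, h1⟩⟩
  have h2 : 1 ≤ 2 / √π := by
    rw [le_div_iff₀ (by positivity), one_mul, Real.sqrt_le_left (by norm_num)]
    linarith [Real.pi_lt_d2]
  have h3 : 1 ≤ ((n : ℝ) - 1) ^ (0.304975 : ℝ) := Real.one_le_rpow (by linarith) (by norm_num)
  nlinarith

end

theorem stmt1 (n : ℕ) (hn : 2 ≤ n) :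
    (∀ N : ℕ, 0 < N →
      ∀ U : ContinuousMultilinearMap ℂ (fun _ : Fin n => (Fin N → ℂ)) ℂ,
        BHcomplex n N U ≤ 2 / Real.sqrt π * ((n : ℝ) - 1) ^ (0.304975 : ℝ) * ‖U‖) ∧
    KcomplexOpt n ≤ 2 / Real.sqrt π * ((n : ℝ) - 1) ^ (0.304975 : ℝ) := by
  exact stmt1x bhKh_one bhKh_ge_two n hn
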